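/- arXiv:1912.09190 — 3 statements merged into one kernel-verified Lean document; each statement's English description precedes it below -/
import Mathlib

section
/- Let Ω ⊂ ℝⁿ be bounded open and let (v_j), (ṽ_j) ⊂ C^∞(Ω̄,𝕍) be sequences (identified with the measures v_j 𝓛ⁿ⌞Ω, ṽ_j 𝓛ⁿ⌞Ω) generating the Young measures ν₁ = ((ν_x)_{x∈Ω}, λ₁, (ν_x^∞)_{x∈Ω̄}) and ν₂ = ((δ₀)_{x∈Ω}, λ₂, (ν_x^∞)_{x∈Ω̄}) respectively, with the same concentration-angle family (ν_x^∞). Suppose λ₁ ≪ 𝓛ⁿ and λ₂ ⊥ 𝓛ⁿ. Then the sequence (v_j + ṽ_j) generates the Young measure ν = ((ν_x)_{x∈Ω}, λ₁ + λ₂, (ν_x^∞)_{x∈Ω̄}). -/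
open MeasureTheory Filter Topology

noncomputable section

/-! ## Basic PDE setup -/

abbrev Dom (n : ℕ) := Fin n → ℝ

def unitCube (n : ℕ) : Set (Dom n) := Set.univ.pi fun _ => Set.Ioo (-(1/2) : ℝ) (1/2)

def closedUnitCube (n : ℕ) : Set (Dom n) := Set.univ.pi fun _ => Set.Icc (-(1/2) : ℝ) (1/2)

/-- The finite set of multi-indices of degree `k`. -/
def degSet (n k : ℕ) : Finset (Fin n → ℕ) :=
  (Fintype.piFinset fun _ : Fin n => Finset.range (k+1)).filter fun α => (∑ i, α i) = k

/-- Partial derivative in the `j`-th coordinate direction. -/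
def pderivDir {n : ℕ} {V : Type*} [NormedAddCommGroup V] [NormedSpace ℝ V]
    (j : Fin n) (u : Dom n → V) : Dom n → V :=
  fun x => fderiv ℝ u x (Pi.single j 1)

/-- The multi-index partial derivative `∂^α`. -/
def mderiv {n : ℕ} {V : Type*} [NormedAddCommGroup V] [NormedSpace ℝ V]
    (α : Fin n → ℕ) (u : Dom n → V) : Dom n → V :=
  (List.finRange n).foldr (fun j f => (pderivDir j)^[α j] f) u

/-- The action of a homogeneous `k`-th order constant-coefficient operator with
coefficients `A α` on a function. -/
def opApply {n : ℕ} {V W : Type*} [NormedAddCommGroup V] [NormedSpace ℝ V]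
    [NormedAddCommGroup W] [NormedSpace ℝ W]
    (A : (Fin n → ℕ) → (V →L[ℝ] W)) (k : ℕ) (u : Dom n → V) (x : Dom n) : W :=
  ∑ α ∈ degSet n k, A α (mderiv α u x)

/-- The symbol `𝒜(ξ) = Σ_{|α|=k} ξ^α A_α`. -/
def opSymbol {n : ℕ} {V W : Type*} [NormedAddCommGroup V] [NormedSpace ℝ V]
    [NormedAddCommGroup W] [NormedSpace ℝ W]
    (A : (Fin n → ℕ) → (V →L[ℝ] W)) (k : ℕ) (ξ : Dom n) : V →L[ℝ] W :=
  ∑ α ∈ degSet n k, (∏ i, ξ i ^ α i) • A α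

/-- The wave cone `Λ_𝒜 = ⋃_{ξ ≠ 0} ker 𝒜(ξ)`. -/
def waveCone {n : ℕ} {V W : Type*} [NormedAddCommGroup V] [NormedSpace ℝ V]
    [NormedAddCommGroup W] [NormedSpace ℝ W]
    (A : (Fin n → ℕ) → (V →L[ℝ] W)) (k : ℕ) : Set V :=
  {v | ∃ ξ : Dom n, ξ ≠ 0 ∧ opSymbol A k ξ v = 0}

/-- The wave cone is spanning. -/
def SpanningCone {n : ℕ} {V W : Type*} [NormedAddCommGroup V] [NormedSpace ℝ V]
    [NormedAddCommGroup W] [NormedSpace ℝ W]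
    (A : (Fin n → ℕ) → (V →L[ℝ] W)) (k : ℕ) : Prop :=
  Submodule.span ℝ (waveCone A k) = ⊤

/-- `ℬ` is an exact potential of `𝒜`:  `ker 𝒜(ξ) = im ℬ(ξ)` for all `ξ ≠ 0`. -/
def ExactPotential {n : ℕ} {U V W : Type*} [NormedAddCommGroup V] [NormedSpace ℝ V]
    [NormedAddCommGroup W] [NormedSpace ℝ W] [NormedAddCommGroup U] [NormedSpace ℝ U]
    (A : (Fin n → ℕ) → (V →L[ℝ] W)) (k : ℕ)
    (B : (Fin n → ℕ) → (U →L[ℝ] V)) (l : ℕ) : Prop :=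
  ∀ ξ : Dom n, ξ ≠ 0 → LinearMap.ker (opSymbol A k ξ : V →ₗ[ℝ] W) = LinearMap.range (opSymbol B l ξ : U →ₗ[ℝ] V)

/-- `ℤⁿ`-periodicity. -/
def ZPeriodic {n : ℕ} {V : Type*} (v : Dom n → V) : Prop :=
  ∀ (x : Dom n) (m : Fin n → ℤ), v (x + fun i => (m i : ℝ)) = v x

/-- `𝒜`-quasiconvexity of a continuous integrand. -/
def AQuasiconvex {n : ℕ} {V W : Type*} [NormedAddCommGroup V] [NormedSpace ℝ V]
    [NormedAddCommGroup W] [NormedSpace ℝ W]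
    (A : (Fin n → ℕ) → (V →L[ℝ] W)) (k : ℕ) (f : V → ℝ) : Prop :=
  Continuous f ∧ ∀ (z : V) (v : Dom n → V), ContDiff ℝ (⊤ : ℕ∞) v → ZPeriodic v →
    (∫ x in unitCube n, v x) = 0 → (∀ x, opApply A k v x = 0) →
    f z ≤ ∫ x in unitCube n, f (z + v x)

def LinearGrowth {V : Type*} [NormedAddCommGroup V] (f : V → ℝ) : Prop :=
  ∃ c : ℝ, ∀ z, |f z| ≤ c * (1 + ‖z‖)

/-- Upper recession function `f^∞(z) = limsup_{t→∞, z'→z} f(tz')/t`. -/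
def urec {V : Type*} [NormedAddCommGroup V] [NormedSpace ℝ V] (f : V → ℝ) (z : V) : ℝ :=
  limsup (fun p : ℝ × V => f (p.1 • p.2) / p.1) (atTop ×ˢ 𝓝 z)

/-- The radial recession function `z ↦ limsup_{t→∞} f(tz)/t`. -/
def rrec {V : Type*} [NormedAddCommGroup V] [NormedSpace ℝ V] (f : V → ℝ) (z : V) : ℝ :=
  limsup (fun t : ℝ => f (t • z) / t) atTop

/-- `g` is the recession function of `Φ`, the limit being locally uniform. -/
def HasRec {V : Type*} [NormedAddCommGroup V] [NormedSpace ℝ V] (Φ g : V → ℝ) : Prop :=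
  TendstoLocallyUniformly (fun (t : ℝ) (z : V) => Φ (t • z) / t) g atTop

/-- Membership in the class `ℍ`. -/
def MemH {V : Type*} [NormedAddCommGroup V] [NormedSpace ℝ V] (Φ : V → ℝ) : Prop :=
  Continuous Φ ∧ LinearGrowth Φ ∧ ∃ g : V → ℝ, HasRec Φ g

/-- `C_c^∞` functions with support in `Ω`. -/
def CcSmooth {n : ℕ} {U : Type*} [NormedAddCommGroup U] [NormedSpace ℝ U]
    (Ω : Set (Dom n)) (u : Dom n → U) : Prop :=
  ContDiff ℝ (⊤ : ℕ∞) u ∧ HasCompactSupport u ∧ tsupport u ⊆ Ω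

/-- The `W^{l-1,1}` norm : sum of the `L¹` norms of derivatives of order `< l`. -/
def sobNorm {n : ℕ} {U : Type*} [NormedAddCommGroup U] [NormedSpace ℝ U]
    (l : ℕ) (u : Dom n → U) : ℝ :=
  ∑ j ∈ Finset.range l, ∫ x : Dom n, ‖iteratedFDeriv ℝ j u x‖

/-- Membership of a pair `(ν⁰, ν^∞)` in the set `Y(z)` of Young measures generated by
sequences `z + ℬ u_j` with `u_j ∈ C_c^∞(𝕏, 𝕌)` and `‖u_j‖_{W^{l-1,1}} → 0`. -/
def memY {n : ℕ} {U V : Type*} [NormedAddCommGroup V] [InnerProductSpace ℝ V]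
    [FiniteDimensional ℝ V] [MeasurableSpace V] [BorelSpace V]
    [NormedAddCommGroup U] [NormedSpace ℝ U]
    (B : (Fin n → ℕ) → (U →L[ℝ] V)) (l : ℕ) (z : V)
    (nu0 : Measure V) (nuInf : Measure (Metric.sphere (0:V) 1)) : Prop :=
  ∃ u : ℕ → Dom n → U,
    (∀ j, CcSmooth (unitCube n) (u j)) ∧
    Tendsto (fun j => sobNorm l (u j)) atTop (𝓝 0) ∧
    ∀ Φ : V → ℝ, MemH Φ →
      Tendsto (fun j => ∫ x in unitCube n, Φ (z + opApply B l (u j) x)) atTop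
        (𝓝 ((∫ v, Φ v ∂nu0) + ∫ w, rrec Φ (w : V) ∂nuInf))

/-! ## The transform T, Lipschitz test classes, derivative sets, envelopes -/

/-- The transformed integrand on the open unit ball. -/
def transf {V : Type*} [NormedAddCommGroup V] [NormedSpace ℝ V] (Φ : V → ℝ) (zh : V) : ℝ :=
  (1 - ‖zh‖) * Φ ((1 - ‖zh‖)⁻¹ • zh)

/-- The function `TΦ` on the closed unit ball (as a function on `V`). -/
def Tfun {V : Type*} [NormedAddCommGroup V] [NormedSpace ℝ V] (Φ : V → ℝ) (zh : V) : ℝ :=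
  if ‖zh‖ < 1 then transf Φ zh else rrec Φ zh

/-- `‖TΦ‖_LIP ≤ 1` on the closed unit ball. -/
def TLipUnit {V : Type*} [NormedAddCommGroup V] [NormedSpace ℝ V] (Φ : V → ℝ) : Prop :=
  ∃ K : NNReal, LipschitzOnWith K (Tfun Φ) (Metric.closedBall (0:V) 1) ∧
    (⨆ zh ∈ Metric.closedBall (0:V) 1, |Tfun Φ zh|) + (K : ℝ) ≤ 1

/-- `‖η‖_LIP ≤ 1` on `Ω̄` (with the `ℓ^∞` metric on `ℝⁿ`). -/
def etaLipUnit {n : ℕ} (Ω : Set (Dom n)) (η : Dom n → ℝ) : Prop :=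
  ∃ K : NNReal, LipschitzOnWith K η (closure Ω) ∧
    (⨆ x ∈ closure Ω, |η x|) + (K : ℝ) ≤ 1

/-- The set of derivatives `F'(z₀)` of `F` (realized as vectors via the inner product). -/
def derivSet {V : Type*} [NormedAddCommGroup V] [InnerProductSpace ℝ V]
    [FiniteDimensional ℝ V] (F : V → ℝ) : Set V :=
  {ζ : V | ∃ z₀ : V, HasFDerivAt F (InnerProductSpace.toDual ℝ V ζ : V →L[ℝ] ℝ) z₀}

/-- The support function of a set `D ⊂ 𝕍`. -/
def suppFn {V : Type*} [NormedAddCommGroup V] [InnerProductSpace ℝ V]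
    (D : Set V) (w : V) : ℝ :=
  sSup ((fun ζ => (inner ℝ ζ w : ℝ)) '' D)

/-- The `𝒜`-quasiconvex envelope, with values in `[-∞, ∞)` (realized in `EReal`). -/
def qcEnv {n : ℕ} {V W : Type*} [NormedAddCommGroup V] [InnerProductSpace ℝ V]
    [FiniteDimensional ℝ V] [NormedAddCommGroup W] [NormedSpace ℝ W]
    (A : (Fin n → ℕ) → (V →L[ℝ] W)) (k : ℕ) (Φ : V → ℝ) (ξ : V) : EReal :=
  sInf {r : EReal | ∃ v : Dom n → V, ContDiff ℝ (⊤ : ℕ∞) v ∧ ZPeriodic v ∧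
    (∫ x in unitCube n, v x) = 0 ∧ (∀ x, opApply A k v x = 0) ∧
    r = ((∫ x in unitCube n, Φ (ξ + v x) : ℝ) : EReal)}

/-- A standard mollifier: smooth, nonnegative, supported in the closed unit cube,
positive on the open unit cube, with integral one. -/
def IsStdMollifier (n : ℕ) (ρ : Dom n → ℝ) : Prop :=
  ContDiff ℝ (⊤ : ℕ∞) ρ ∧ (∀ x, 0 ≤ ρ x) ∧ tsupport ρ ⊆ closedUnitCube n ∧
    (∀ x ∈ unitCube n, 0 < ρ x) ∧ (∫ x : Dom n, ρ x) = 1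

/-- A mollifier (no interior positivity required). -/
def IsMollifier (n : ℕ) (ρ : Dom n → ℝ) : Prop :=
  ContDiff ℝ (⊤ : ℕ∞) ρ ∧ (∀ x, 0 ≤ ρ x) ∧ tsupport ρ ⊆ closedUnitCube n ∧
    (∫ x : Dom n, ρ x) = 1

/-- The rescaled mollifier kernel `φ_t(x) = t^{-n} φ(x/t)`. -/
def mollK {n : ℕ} (ρ : Dom n → ℝ) (t : ℝ) (x : Dom n) : ℝ := ((t : ℝ) ^ n)⁻¹ * ρ (t⁻¹ • x)

/-! ## Young measures -/

/-- A (generalized) Young measure `ν = ((ν_x), λ, (ν_x^∞))` on `Ω`. -/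
structure YoungMeasure (n : ℕ) (V : Type*) [NormedAddCommGroup V] [InnerProductSpace ℝ V]
    [FiniteDimensional ℝ V] [MeasurableSpace V] [BorelSpace V] (Ω : Set (Dom n)) where
  /-- the oscillation measures `(ν_x)` -/
  osc : Dom n → Measure V
  /-- the concentration measure `λ` -/
  conc : Measure (Dom n)
  /-- the concentration-angle measures `(ν_x^∞)` -/
  ang : Dom n → Measure (Metric.sphere (0:V) 1)
  osc_meas : Measurable osc
  osc_prob : ∀ᵐ x ∂(volume.restrict Ω), IsProbabilityMeasure (osc x)
  moment : (∫⁻ x in Ω, ∫⁻ z, ‖z‖₊ ∂(osc x)) < ⊤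
  conc_finite : IsFiniteMeasure conc
  conc_carrier : conc (closure Ω)ᶜ = 0
  ang_meas : Measurable ang
  ang_prob : ∀ᵐ x ∂conc, IsProbabilityMeasure (ang x)

namespace YoungMeasure

variable {n : ℕ} {V : Type*} [NormedAddCommGroup V] [InnerProductSpace ℝ V]
  [FiniteDimensional ℝ V] [MeasurableSpace V] [BorelSpace V] {Ω : Set (Dom n)}

/-- The barycentre `ν̄_x` of the oscillation measure. -/
def barOsc (Y : YoungMeasure n V Ω) (x : Dom n) : V := ∫ z, z ∂(Y.osc x)

/-- The barycentre `ν̄_x^∞` of the concentration-angle measure. -/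
def barAng (Y : YoungMeasure n V Ω) (x : Dom n) : V := ∫ w, (w : V) ∂(Y.ang x)

/-- The density `λ^a` of the absolutely continuous part of `λ`. -/
def lamA (Y : YoungMeasure n V Ω) (x : Dom n) : ℝ := (Y.conc.rnDeriv volume x).toReal

/-- The singular part `λ^s` of `λ`. -/
def lamS (Y : YoungMeasure n V Ω) : Measure (Dom n) := Y.conc.singularPart volume

/-- The density `ν̄_x + λ^a(x) ν̄_x^∞` of the absolutely continuous part of the barycentre. -/
def baryAC (Y : YoungMeasure n V Ω) (x : Dom n) : V := Y.barOsc x + Y.lamA x • Y.barAng x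

/-- The mollification at scale `t` of the absolutely continuous part of the barycentre
(extended by zero outside `Ω`). -/
def mollACpart (Y : YoungMeasure n V Ω) (ρ : Dom n → ℝ) (t : ℝ) (x : Dom n) : V :=
  ∫ y in Ω, mollK ρ t (x - y) • Y.baryAC y

/-- The mollification at scale `t` of the singular part `ν̄^∞ λ^s` of the barycentre. -/
def mollSingPart (Y : YoungMeasure n V Ω) (ρ : Dom n → ℝ) (t : ℝ) (x : Dom n) : V :=
  ∫ y, mollK ρ t (x - y) • Y.barAng y ∂Y.lamS

/-- The mollification at scale `t` of the barycentre `v` of `Y`. -/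
def mollBary (Y : YoungMeasure n V Ω) (ρ : Dom n → ℝ) (t : ℝ) (x : Dom n) : V :=
  Y.mollACpart ρ t x + Y.mollSingPart ρ t x

/-- The formal adjoint `𝒜^*` applied to a test function. -/
def adjOp {W : Type*} [NormedAddCommGroup W] [InnerProductSpace ℝ W] [FiniteDimensional ℝ W]
    (A : (Fin n → ℕ) → (V →L[ℝ] W)) (k : ℕ) (φ : Dom n → W) (x : Dom n) : V :=
  ∑ α ∈ degSet n k, (ContinuousLinearMap.adjoint (A α)) (mderiv α φ x)

/-- `𝒜 v = 0` in the sense of distributions on `Ω`, where `v` is the barycentre of `Y`. -/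
def AFree {W : Type*} [NormedAddCommGroup W] [InnerProductSpace ℝ W] [FiniteDimensional ℝ W]
    (A : (Fin n → ℕ) → (V →L[ℝ] W)) (k : ℕ) (Y : YoungMeasure n V Ω) : Prop :=
  ∀ φ : Dom n → W, ContDiff ℝ (⊤ : ℕ∞) φ → HasCompactSupport φ → tsupport φ ⊆ Ω →
    (∫ x in Ω, (inner ℝ (adjOp A k φ x) (Y.baryAC x) : ℝ)) +
      (∫ x, (inner ℝ (adjOp A k φ x) (Y.barAng x) : ℝ) ∂Y.lamS) = 0

/-- The a.e. Jensen-type inequalities for `𝒜`-quasiconvex integrands of linear growth. -/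
def JensenAE {W : Type*} [NormedAddCommGroup W] [NormedSpace ℝ W]
    (A : (Fin n → ℕ) → (V →L[ℝ] W)) (k : ℕ) (Y : YoungMeasure n V Ω) : Prop :=
  ∀ f : V → ℝ, AQuasiconvex A k f → LinearGrowth f →
    ∀ᵐ x ∂(volume.restrict Ω),
      f (Y.baryAC x) ≤ (∫ z, f z ∂(Y.osc x)) + Y.lamA x * ∫ w, urec f (w : V) ∂(Y.ang x)

end YoungMeasure

/-- The recession function in the second variable of a non-autonomous integrand. -/
def urecx {n : ℕ} {V : Type*} [NormedAddCommGroup V] [NormedSpace ℝ V]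
    (Φ : Dom n → V → ℝ) (x : Dom n) (z : V) : ℝ :=
  limsup (fun t : ℝ => Φ x (t • z) / t) atTop

/-- Membership in the class `𝔼(Ω, 𝕍)` of non-autonomous integrands. -/
def MemE {n : ℕ} {V : Type*} [NormedAddCommGroup V] [NormedSpace ℝ V]
    (Ω : Set (Dom n)) (Φ : Dom n → V → ℝ) : Prop :=
  Continuous (fun p : Dom n × V => Φ p.1 p.2) ∧
  (∃ c, ∀ x ∈ closure Ω, ∀ z, |Φ x z| ≤ c * (1 + ‖z‖)) ∧
  ∃ g : Dom n → V → ℝ,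
    TendstoUniformlyOn (fun (t : ℝ) (p : Dom n × V) => Φ p.1 (t • p.2) / t)
      (fun p => g p.1 p.2) atTop ((closure Ω) ×ˢ {z : V | ‖z‖ = 1})

/-- A sequence `(w_j 𝓛ⁿ⌞Ω)` of absolutely continuous measures generates the Young measure `Y`. -/
def GeneratesYM {n : ℕ} {V : Type*} [NormedAddCommGroup V] [InnerProductSpace ℝ V]
    [FiniteDimensional ℝ V] [MeasurableSpace V] [BorelSpace V] {Ω : Set (Dom n)}
    (w : ℕ → Dom n → V) (Y : YoungMeasure n V Ω) : Prop :=
  ∀ Φ : Dom n → V → ℝ, MemE Ω Φ →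
    Tendsto (fun j => ∫ x in Ω, Φ x (w j x)) atTop
      (𝓝 ((∫ x in Ω, ∫ z, Φ x z ∂(Y.osc x)) +
        ∫ x, (∫ ζ, urecx Φ x (ζ : V) ∂(Y.ang x)) ∂Y.conc))

section Helpers

variable {n : ℕ} {V : Type*} [NormedAddCommGroup V] [InnerProductSpace ℝ V]

theorem h7_radial {Ω : Set (Dom n)} {Φ : Dom n → V → ℝ} (hΦ : MemE Ω Φ) {δ : ℝ} (hδ : 0 < δ) :
    ∃ R : ℝ, 1 ≤ R ∧ ∀ x ∈ closure Ω, ∀ z : V,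
      |Φ x z - max (‖z‖ / R) 1 * Φ x ((max (‖z‖ / R) 1)⁻¹ • z)| ≤ δ * (1 + ‖z‖) := by
  obtain ⟨-, -, g, hg⟩ := hΦ
  rw [Metric.tendstoUniformlyOn_iff] at hg
  obtain ⟨T, hT⟩ := eventually_atTop.1 (hg (δ / 2) (by positivity))
  refine ⟨max T 1, le_max_right _ _, fun x hx z => ?_⟩
  set R := max T 1 with hR
  have hR1 : 1 ≤ R := le_max_right _ _
  have hR0 : 0 < R := by linarith
  by_cases hz : ‖z‖ ≤ R
  · have : max (‖z‖ / R) 1 = 1 := max_eq_right ((div_le_one hR0).2 hz)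
    rw [this]
    simp
    positivity
  · push Not at hz
    have hz0 : 0 < ‖z‖ := by linarith
    have hm : max (‖z‖ / R) 1 = ‖z‖ / R := max_eq_left ((one_le_div hR0).2 hz.le)
    rw [hm]
    have hζ : ‖(‖z‖⁻¹ • z)‖ = 1 := by
      rw [norm_smul, norm_inv, norm_norm, inv_mul_cancel₀ hz0.ne']
    have h1 := hT ‖z‖ ((le_max_left T 1).trans hz.le) (x, ‖z‖⁻¹ • z) ⟨hx, hζ⟩
    have h2 := hT R (le_max_left T 1) (x, ‖z‖⁻¹ • z) ⟨hx, hζ⟩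
    simp only [smul_smul, mul_inv_cancel₀ hz0.ne', one_smul] at h1 h2
    rw [inv_div, div_eq_mul_inv R]
    have h3 : |Φ x z / ‖z‖ - Φ x ((R * ‖z‖⁻¹) • z) / R| < δ := by
      have := dist_triangle_left (Φ x z / ‖z‖) (Φ x ((R * ‖z‖⁻¹) • z) / R) (g x (‖z‖⁻¹ • z))
      rw [Real.dist_eq] at this
      linarith
    have h4 : Φ x z - ‖z‖ / R * Φ x ((R * ‖z‖⁻¹) • z)
        = ‖z‖ * (Φ x z / ‖z‖ - Φ x ((R * ‖z‖⁻¹) • z) / R) := by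
      field_simp
    rw [h4, abs_mul, abs_of_pos hz0]
    nlinarith

theorem h7_ball [FiniteDimensional ℝ V] {Ω : Set (Dom n)} (hΩ : Bornology.IsBounded Ω)
    {Φ : Dom n → V → ℝ}
    (hc : Continuous (fun p : Dom n × V => Φ p.1 p.2)) {δ : ℝ} (hδ : 0 < δ) (R : ℝ) :
    ∃ C : ℝ, 0 ≤ C ∧ ∀ x ∈ closure Ω, ∀ p q : V, ‖p‖ ≤ R → ‖q‖ ≤ R →
      |Φ x p| ≤ C ∧ |Φ x p - Φ x q| ≤ δ + C * ‖p - q‖ := by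
  have hK : IsCompact (closure Ω ×ˢ Metric.closedBall (0:V) R) :=
    hΩ.isCompact_closure.prod (isCompact_closedBall _ _)
  obtain ⟨M, hM⟩ := hK.exists_bound_of_continuousOn hc.continuousOn
  have huc := hK.uniformContinuousOn_of_continuous hc.continuousOn
  rw [Metric.uniformContinuousOn_iff] at huc
  obtain ⟨κ, hκ, h⟩ := huc δ hδ
  have hM' : ∀ x ∈ closure Ω, ∀ p : V, ‖p‖ ≤ R → |Φ x p| ≤ |M| := fun x hx p hp => by
    have := hM (x, p) ⟨hx, by simpa using hp⟩
    exact this.trans (le_abs_self _)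
  refine ⟨|M| + 2 * |M| / κ, by positivity, fun x hx p q hp hq => ⟨?_, ?_⟩⟩
  · have : 0 ≤ 2 * |M| / κ := by positivity
    linarith [hM' x hx p hp]
  · by_cases hpq : ‖p - q‖ < κ
    · have := h (x, p) ⟨hx, by simpa using hp⟩ (x, q) ⟨hx, by simpa using hq⟩
        (by simpa [Prod.dist_eq, dist_eq_norm] using hpq)
      rw [Real.dist_eq] at this
      have h0 : 0 ≤ (|M| + 2 * |M| / κ) * ‖p - q‖ := by positivity
      simp only at this
      linarith
    · push Not at hpq
      have h1 := hM' x hx p hp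
      have h2 := hM' x hx q hq
      have h3 := abs_sub (Φ x p) (Φ x q)
      have h4 : 2 * |M| ≤ 2 * |M| / κ * ‖p - q‖ := by
        rw [div_mul_eq_mul_div, le_div_iff₀ hκ]
        gcongr
      have h5 : 0 ≤ |M| * ‖p - q‖ := by positivity
      nlinarith

theorem h7_lip [FiniteDimensional ℝ V] {Ω : Set (Dom n)} (hΩ : Bornology.IsBounded Ω)
    {Φ : Dom n → V → ℝ} (hΦ : MemE Ω Φ) {δ : ℝ} (hδ : 0 < δ) :
    ∃ C : ℝ, 0 ≤ C ∧ ∀ x ∈ closure Ω, ∀ a b : V,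
      |Φ x (a + b) - Φ x a| ≤ δ * (1 + ‖a‖) + C * ‖b‖ := by
  obtain ⟨R, hR1, hR⟩ := h7_radial hΦ (show 0 < δ / 3 by positivity)
  obtain ⟨C, hC0, hC⟩ := h7_ball hΩ hΦ.1 (show 0 < δ / 3 by positivity) R
  have hR0 : 0 < R := by linarith
  refine ⟨δ / 3 + C + 2 * C, by positivity, fun x hx a b => ?_⟩
  have hm1 : ∀ z : V, 1 ≤ max (‖z‖ / R) 1 := fun z => le_max_right _ _
  have hpi : ∀ z : V, ‖(max (‖z‖ / R) 1)⁻¹ • z‖ ≤ R := fun z => by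
    have h0 : 0 < max (‖z‖ / R) 1 := by linarith [hm1 z]
    rw [norm_smul, norm_inv, Real.norm_of_nonneg h0.le, inv_mul_le_iff₀ h0]
    have := le_max_left (‖z‖ / R) 1
    rwa [div_le_iff₀ hR0] at this
  have hmL : |max (‖a + b‖ / R) 1 - max (‖a‖ / R) 1| ≤ ‖b‖ / R := by
    refine (abs_max_sub_max_le_abs _ _ _).trans ?_
    rw [← sub_div, abs_div, abs_of_pos hR0]
    gcongr
    simpa using abs_norm_sub_norm_le (a + b) a
  have hma : max (‖a‖ / R) 1 ≤ 1 + ‖a‖ := by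
    refine max_le ?_ (by linarith [norm_nonneg a])
    have := div_le_self (norm_nonneg a) hR1
    linarith
  have e1 := hR x hx (a + b)
  have e2 := hR x hx a
  set m := max (‖a‖ / R) 1 with hm
  set m' := max (‖a + b‖ / R) 1 with hm'
  set p := m⁻¹ • a with hp
  set p' := m'⁻¹ • (a + b) with hp'
  have hm0 : 0 < m := by linarith [hm1 a]
  have hm0' : 0 < m' := by linarith [hm1 (a + b)]
  have f1 := (hC x hx p' p (hpi _) (hpi _))
  have hbR : ‖b‖ / R ≤ ‖b‖ := div_le_self (norm_nonneg b) hR1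
  have key : m * ‖p' - p‖ ≤ 2 * ‖b‖ := by
    have h1 : m • p = a := by rw [hp, smul_inv_smul₀ hm0.ne']
    have h2 : m' • p' = a + b := by rw [hp', smul_inv_smul₀ hm0'.ne']
    have h3 : m • (p' - p) = b - (m' - m) • p' := by
      rw [smul_sub, sub_smul, h1, h2]; abel
    calc m * ‖p' - p‖ = ‖m • (p' - p)‖ := by rw [norm_smul, Real.norm_of_nonneg hm0.le]
      _ ≤ ‖b‖ + |m' - m| * ‖p'‖ := by
        rw [h3]; refine (norm_sub_le _ _).trans ?_
        rw [norm_smul, Real.norm_eq_abs]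
      _ ≤ ‖b‖ + ‖b‖ / R * R := by
        gcongr
        exact hpi _
      _ = 2 * ‖b‖ := by field_simp; ring
  have g1 : |m' * Φ x p' - m * Φ x p| ≤ ‖b‖ * C + (δ / 3 * (1 + ‖a‖) + C * (2 * ‖b‖)) := by
    have : m' * Φ x p' - m * Φ x p = (m' - m) * Φ x p' + m * (Φ x p' - Φ x p) := by ring
    rw [this]
    refine (abs_add_le _ _).trans ?_
    rw [abs_mul, abs_mul, abs_of_pos hm0]
    refine add_le_add (mul_le_mul (hmL.trans hbR) f1.1 (abs_nonneg _) (norm_nonneg _)) ?_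
    calc m * |Φ x p' - Φ x p| ≤ m * (δ / 3 + C * ‖p' - p‖) := by gcongr; exact f1.2
      _ = δ / 3 * m + C * (m * ‖p' - p‖) := by ring
      _ ≤ _ := by gcongr
  have hab := norm_add_le a b
  have hab' : δ / 3 * ‖a + b‖ ≤ δ / 3 * (‖a‖ + ‖b‖) := by gcongr
  rw [abs_le] at e1 e2 g1 ⊢
  constructor <;> nlinarith

theorem h7_key [FiniteDimensional ℝ V] {Ω : Set (Dom n)} (hΩ : Bornology.IsBounded Ω)
    {Φ : Dom n → V → ℝ} (hΦ : MemE Ω Φ) {δ : ℝ} (hδ : 0 < δ) :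
    ∃ C : ℝ, 0 ≤ C ∧ ∀ x ∈ closure Ω, ∀ a b : V,
      |Φ x (a + b) - Φ x a - Φ x b + Φ x 0| ≤
        δ * (2 + ‖a‖ + ‖b‖) + C * min ‖a‖ ‖b‖ := by
  obtain ⟨C, hC0, hC⟩ := h7_lip hΩ hΦ hδ
  refine ⟨2 * C, by positivity, fun x hx => ?_⟩
  have main : ∀ a b : V, |Φ x (a + b) - Φ x a - Φ x b + Φ x 0| ≤
        δ * (2 + ‖a‖ + ‖b‖) + 2 * C * ‖b‖ := fun a b => by
    have h1 := hC x hx a b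
    have h2 := hC x hx 0 b
    have h3 : 0 ≤ δ * ‖b‖ := by positivity
    simp only [zero_add, norm_zero, add_zero] at h2
    rw [abs_le] at h1 h2 ⊢
    constructor <;> nlinarith
  intro a b
  rcases le_total ‖a‖ ‖b‖ with h | h
  · rw [min_eq_left h]
    have := main b a
    rw [add_comm b a] at this
    rw [show Φ x (a + b) - Φ x a - Φ x b + Φ x 0 = Φ x (a + b) - Φ x b - Φ x a + Φ x 0 by ring]
    linarith
  · rw [min_eq_right h]; exact main a b

theorem h7_memE_norm {Ω : Set (Dom n)} {ψ : Dom n → ℝ} (hψ : Continuous ψ)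
    (h01 : ∀ x, ψ x ∈ Set.Icc (0:ℝ) 1) : MemE Ω (fun x (z : V) => ψ x * ‖z‖) := by
  refine ⟨by fun_prop, ⟨1, fun x _ z => ?_⟩, fun x z => ψ x * ‖z‖, ?_⟩
  · rw [abs_mul, abs_norm, abs_of_nonneg (h01 x).1]
    nlinarith [(h01 x).2, norm_nonneg z]
  · rw [Metric.tendstoUniformlyOn_iff]
    intro ε hε
    filter_upwards [eventually_gt_atTop 0] with t ht p _
    rw [norm_smul, Real.norm_of_nonneg ht.le]
    have : ψ p.1 * (t * ‖p.2‖) / t = ψ p.1 * ‖p.2‖ := by field_simp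
    simpa [this] using hε

theorem h7_urecx_norm (ψ : Dom n → ℝ) (x : Dom n) (z : V) :
    urecx (fun x (z : V) => ψ x * ‖z‖) x z = ψ x * ‖z‖ := by
  unfold urecx
  apply Tendsto.limsup_eq
  refine tendsto_const_nhds.congr' ?_
  filter_upwards [eventually_gt_atTop 0] with t ht
  rw [norm_smul, Real.norm_of_nonneg ht.le]
  field_simp

theorem h7_urecx_tendsto {Ω : Set (Dom n)} {Φ : Dom n → V → ℝ} (hΦ : MemE Ω Φ)
    {x : Dom n} (hx : x ∈ closure Ω) {z : V} (hz : ‖z‖ = 1) :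
    Tendsto (fun t : ℝ => Φ x (t • z) / t) atTop (𝓝 (urecx Φ x z)) := by
  obtain ⟨-, -, g, hg⟩ := hΦ
  have := hg.tendsto_at (x := (x, z)) ⟨hx, hz⟩
  have h2 : urecx Φ x z = g x z := this.limsup_eq
  rw [h2]
  exact this

variable [FiniteDimensional ℝ V] [MeasurableSpace V] [BorelSpace V]

/-- The mass measure of a Young measure. -/
def h7mass {Ω : Set (Dom n)} (Y : YoungMeasure n V Ω) : Measure (Dom n) :=
  (volume.restrict Ω).withDensity (fun x => ∫⁻ z, ‖z‖₊ ∂(Y.osc x)) + Y.conc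

theorem h7mass_finite {Ω : Set (Dom n)} (Y : YoungMeasure n V Ω) : IsFiniteMeasure (h7mass Y) := by
  have := Y.conc_finite
  have : IsFiniteMeasure ((volume.restrict Ω).withDensity (fun x => ∫⁻ z, ‖z‖₊ ∂(Y.osc x))) :=
    isFiniteMeasure_withDensity Y.moment.ne
  unfold h7mass
  infer_instance

theorem h7mass_bound {Ω : Set (Dom n)} (Y : YoungMeasure n V Ω) {ψ : Dom n → ℝ}
    (h01 : ∀ x, ψ x ∈ Set.Icc (0:ℝ) 1) {S : Set (Dom n)} (hS : MeasurableSet S)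
    (hψS : ∀ x, x ∉ S → ψ x = 0) :
    ‖(∫ x in Ω, ∫ z, ψ x * ‖z‖ ∂(Y.osc x)) +
        ∫ x, (∫ ζ, urecx (fun x (z : V) => ψ x * ‖z‖) x (ζ : V) ∂(Y.ang x)) ∂Y.conc‖ₑ
      ≤ h7mass Y S := by
  have hle : ∀ x, ‖ψ x‖ₑ ≤ S.indicator 1 x := fun x => by
    by_cases hx : x ∈ S
    · rw [Set.indicator_of_mem hx, Real.enorm_eq_ofReal (h01 x).1]
      simpa using (h01 x).2
    · simp [hψS x hx]
  refine (enorm_add_le _ _).trans ?_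
  rw [h7mass, Measure.add_apply]
  refine add_le_add ?_ ?_
  · refine (enorm_integral_le_lintegral_enorm _).trans ?_
    rw [withDensity_apply _ hS, ← lintegral_indicator hS]
    refine lintegral_mono fun x => ?_
    refine (enorm_integral_le_lintegral_enorm _).trans ?_
    by_cases hx : x ∈ S
    · rw [Set.indicator_of_mem hx]
      refine lintegral_mono fun z => ?_
      rw [enorm_mul, enorm_norm]
      have := hle x
      rw [Set.indicator_of_mem hx] at this
      calc ‖ψ x‖ₑ * ‖z‖ₑ ≤ 1 * ‖z‖ₑ := by gcongr; simpa using this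
        _ = ‖z‖₊ := by rw [one_mul]; rfl
    · simp [hψS x hx]
  · refine (enorm_integral_le_lintegral_enorm _).trans ?_
    rw [← lintegral_indicator_one hS]
    refine lintegral_mono_ae ?_
    filter_upwards [Y.ang_prob] with x hx
    simp only [h7_urecx_norm]
    have : ∀ ζ : Metric.sphere (0:V) 1, ψ x * ‖(ζ : V)‖ = ψ x := fun ζ => by simp
    simp only [this, integral_const, probReal_univ, one_smul]
    exact hle x

theorem h7_integrable {Ω : Set (Dom n)} (Y : YoungMeasure n V Ω) {Φ : Dom n → V → ℝ}
    (hΦ : MemE Ω Φ) :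
    Integrable (fun x => ∫ ζ, urecx Φ x (ζ : V) ∂(Y.ang x)) Y.conc := by
  classical
  have := Y.conc_finite
  obtain ⟨c, hc⟩ := hΦ.2.1
  have hcl : ∀ᵐ x ∂Y.conc, x ∈ closure Ω := by
    rw [ae_iff]; exact Y.conc_carrier
  have hbd : ∀ x ∈ closure Ω, ∀ (ζ : Metric.sphere (0:V) 1) (t : ℝ), 1 ≤ t →
      |Φ x (t • (ζ : V)) / t| ≤ 2 * |c| := fun x hx ζ t ht => by
    have h0 : 0 < t := by linarith
    rw [abs_div, abs_of_pos h0, div_le_iff₀ h0]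
    refine (hc x hx _).trans ?_
    rw [norm_smul, Real.norm_of_nonneg h0.le]
    simp only [norm_eq_of_mem_sphere, mul_one]
    nlinarith [le_abs_self c, abs_nonneg c]
  have hmS : MeasurableSet {x | Y.ang x Set.univ = 1} :=
    (Measure.measurable_coe MeasurableSet.univ).comp Y.ang_meas (measurableSet_singleton 1)
  let κ : ProbabilityTheory.Kernel (Dom n) (Metric.sphere (0:V) 1) :=
    ⟨fun x => if Y.ang x Set.univ = 1 then Y.ang x else 0,
      Measurable.ite hmS Y.ang_meas measurable_const⟩
  have hκ : ProbabilityTheory.IsFiniteKernel κ := ⟨⟨1, by simp, fun x => by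
    change (if Y.ang x Set.univ = 1 then Y.ang x else 0) Set.univ ≤ 1
    split_ifs with h
    · exact h.le
    · simp⟩⟩
  have hκe : ∀ᵐ x ∂Y.conc, κ x = Y.ang x := by
    filter_upwards [Y.ang_prob] with x hx
    change (if Y.ang x Set.univ = 1 then Y.ang x else 0) = _
    rw [if_pos measure_univ]
  have hlim : ∀ x ∈ closure Ω, ∀ ζ : Metric.sphere (0:V) 1,
      Tendsto (fun k : ℕ => Φ x (((k:ℝ) + 1) • (ζ : V)) / ((k:ℝ) + 1)) atTop
        (𝓝 (urecx Φ x (ζ : V))) := fun x hx ζ =>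
    (h7_urecx_tendsto hΦ hx (by simp)).comp
      (tendsto_atTop_add_const_right _ _ tendsto_natCast_atTop_atTop)
  have hcont := hΦ.1
  have hmeas : AEStronglyMeasurable (fun x => ∫ ζ, urecx Φ x (ζ : V) ∂(Y.ang x)) Y.conc := by
    refine aestronglyMeasurable_of_tendsto_ae (u := atTop)
      (f := fun (k : ℕ) x => ∫ ζ, Φ x (((k:ℝ) + 1) • (ζ : V)) / ((k:ℝ) + 1) ∂(κ x)) ?_ ?_
    · intro k
      refine StronglyMeasurable.aestronglyMeasurable ?_
      refine StronglyMeasurable.integral_kernel_prod_right'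
        (f := fun p : Dom n × Metric.sphere (0:V) 1 =>
          Φ p.1 (((k:ℝ) + 1) • (p.2 : V)) / ((k:ℝ) + 1)) ?_
      refine Continuous.stronglyMeasurable ?_
      refine Continuous.div_const ?_ _
      exact hcont.comp (f := fun p : Dom n × Metric.sphere (0:V) 1 =>
        (p.1, ((k:ℝ) + 1) • (p.2 : V))) (by fun_prop)
    · filter_upwards [hcl, Y.ang_prob, hκe] with x hx hp hk
      rw [hk]
      refine tendsto_integral_of_dominated_convergence (fun _ => 2 * |c|) ?_ ?_ ?_ ?_
      · intro k
        refine Continuous.aestronglyMeasurable ?_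
        refine Continuous.div_const ?_ _
        exact hcont.comp (f := fun ζ : Metric.sphere (0:V) 1 =>
          (x, ((k:ℝ) + 1) • (ζ : V))) (by fun_prop)
      · exact integrable_const _
      · exact fun k => Eventually.of_forall fun ζ => hbd x hx ζ _ (by simp)
      · exact Eventually.of_forall fun ζ => hlim x hx ζ
  refine Integrable.of_bound hmeas (2 * |c|) ?_
  filter_upwards [hcl, Y.ang_prob] with x hx hp
  have hb : ∀ ζ : Metric.sphere (0:V) 1, ‖urecx Φ x (ζ : V)‖ ≤ 2 * |c| := fun ζ =>
    le_of_tendsto (hlim x hx ζ).norm (Eventually.of_forall fun k => hbd x hx ζ _ (by simp))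
  have := norm_integral_le_of_norm_le_const (μ := Y.ang x) (Eventually.of_forall hb)
  simpa using this

theorem h7_intOn {Ω : Set (Dom n)} (hΩ : Bornology.IsBounded Ω) {f : Dom n → ℝ}
    (hf : Continuous f) : IntegrableOn f Ω :=
  (hf.continuousOn.integrableOn_compact hΩ.isCompact_closure).mono_set subset_closure

theorem h7_min {Ω : Set (Dom n)} (hΩb : Bornology.IsBounded Ω)
    (v vt : ℕ → Dom n → V) (hv : ∀ j, Continuous (v j)) (hvt : ∀ j, Continuous (vt j))
    (Y1 Y2 : YoungMeasure n V Ω) (h1 : GeneratesYM v Y1) (h2 : GeneratesYM vt Y2)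
    (hs : (h7mass Y2).MutuallySingular (h7mass Y1)) :
    Tendsto (fun j => ∫ x in Ω, min ‖v j x‖ ‖vt j x‖) atTop (𝓝 0) := by
  have := h7mass_finite Y1
  have := h7mass_finite Y2
  rw [Metric.tendsto_nhds]
  intro ε hε
  obtain ⟨N, hN, hN2, hN1⟩ := hs
  have hε' : ENNReal.ofReal (ε / 2) ≠ 0 := by simpa using hε
  obtain ⟨U, hNU, hU, hU1⟩ := Set.exists_isOpen_lt_of_lt (μ := h7mass Y1) Nᶜ
    (ENNReal.ofReal (ε / 2)) (by rw [hN1]; exact pos_iff_ne_zero.2 hε')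
  obtain ⟨F, hFN, hF, hF1⟩ := hN.compl.exists_isClosed_sdiff_lt (μ := h7mass Y2)
    (measure_ne_top _ _) hε'
  have hF2 : h7mass Y2 Fᶜ < ENNReal.ofReal (ε / 2) := by
    refine lt_of_le_of_lt ?_ hF1
    calc h7mass Y2 Fᶜ ≤ h7mass Y2 (N ∪ (Nᶜ \ F)) := by
          apply measure_mono; intro x hx; by_cases h : x ∈ N
          · exact Or.inl h
          · exact Or.inr ⟨h, hx⟩
      _ ≤ _ := (measure_union_le _ _).trans (by rw [hN2, zero_add])
  obtain ⟨η, hη0, hη1, hη⟩ := exists_continuous_zero_one_of_isClosed hU.isClosed_compl hF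
    (Set.disjoint_compl_left_iff_subset.2 (hFN.trans hNU))
  have hη' : ∀ x, 1 - η x ∈ Set.Icc (0:ℝ) 1 := fun x => by
    have := hη x; constructor <;> linarith [this.1, this.2]
  have t1 := h1 _ (h7_memE_norm (V := V) (Ω := Ω) η.continuous hη)
  have t2 := h2 _ (h7_memE_norm (V := V) (Ω := Ω) (ψ := fun x => 1 - η x) (by fun_prop) hη')
  have b1 := h7mass_bound Y1 hη hU.measurableSet (fun x hx => hη0 hx)
  have b2 := h7mass_bound Y2 hη' hF.measurableSet.compl (fun x hx => by
    have := hη1 (not_not.1 hx); simp at this; simp [this])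
  have c1 := b1.trans_lt hU1
  have c2 := b2.trans_lt hF2
  rw [← ofReal_norm, ENNReal.ofReal_lt_ofReal_iff (by positivity)] at c1 c2
  have c1' := (le_abs_self _).trans_lt c1
  have c2' := (le_abs_self _).trans_lt c2
  filter_upwards [t1.eventually_lt_const c1', t2.eventually_lt_const c2'] with j d1 d2
  have hvj := hv j
  have hvtj := hvt j
  have hp : 0 ≤ ∫ x in Ω, min ‖v j x‖ ‖vt j x‖ :=
    integral_nonneg fun x => le_min (norm_nonneg _) (norm_nonneg _)
  rw [Real.dist_eq, sub_zero, abs_of_nonneg hp]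
  have i1 := h7_intOn hΩb (f := fun x => η x * ‖v j x‖) (by fun_prop)
  have i2 := h7_intOn hΩb (f := fun x => (1 - η x) * ‖vt j x‖) (by fun_prop)
  have i0 := h7_intOn hΩb (f := fun x => min ‖v j x‖ ‖vt j x‖) (by fun_prop)
  have : ∫ x in Ω, min ‖v j x‖ ‖vt j x‖ ≤
      ∫ x in Ω, (η x * ‖v j x‖ + (1 - η x) * ‖vt j x‖) := by
    refine integral_mono i0 (i1.add i2) fun x => ?_
    have l1 := mul_le_mul_of_nonneg_left (min_le_left ‖v j x‖ ‖vt j x‖) (hη x).1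
    have l2 := mul_le_mul_of_nonneg_left (min_le_right ‖v j x‖ ‖vt j x‖) (hη' x).1
    simp only
    linarith
  rw [integral_add i1 i2] at this
  linarith

end Helpers

/-! ## Statement 7: sums of generating sequences (Lemma genseq) -/

theorem stmt7 {n : ℕ} (hn : 0 < n)
    {V : Type*} [NormedAddCommGroup V] [InnerProductSpace ℝ V] [FiniteDimensional ℝ V]
    [MeasurableSpace V] [BorelSpace V]
    (Ω : Set (Dom n)) (hΩo : IsOpen Ω) (hΩb : Bornology.IsBounded Ω)
    (v vt : ℕ → Dom n → V)
    (hv : ∀ j, ContDiff ℝ (⊤ : ℕ∞) (v j)) (hvt : ∀ j, ContDiff ℝ (⊤ : ℕ∞) (vt j))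
    (Y1 Y2 : YoungMeasure n V Ω)
    (hY2osc : ∀ x ∈ Ω, Y2.osc x = Measure.dirac 0)
    (hang : ∀ x, Y2.ang x = Y1.ang x)
    (h1 : GeneratesYM v Y1) (h2 : GeneratesYM vt Y2)
    (habs : Y1.conc ≪ volume) (hsing : Y2.conc.MutuallySingular volume) :
    ∀ Y : YoungMeasure n V Ω, Y.osc = Y1.osc → Y.conc = Y1.conc + Y2.conc →
      Y.ang = Y1.ang → GeneratesYM (fun j x => v j x + vt j x) Y := by
  intro Y hosc hconc hYang Φ hΦ
  have hvc : ∀ j, Continuous (v j) := fun j => (hv j).continuous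
  have hvtc : ∀ j, Continuous (vt j) := fun j => (hvt j).continuous
  have hmass2 : h7mass Y2 = Y2.conc := by
    have : (volume.restrict Ω).withDensity (fun x => ∫⁻ z, ‖z‖₊ ∂(Y2.osc x)) = 0 := by
      rw [← withDensity_zero]
      refine withDensity_congr_ae ?_
      filter_upwards [ae_restrict_mem hΩo.measurableSet] with x hx
      rw [hY2osc x hx, lintegral_dirac]
      simp
    rw [h7mass, this, zero_add]
  have hs : (h7mass Y2).MutuallySingular (h7mass Y1) := by
    rw [hmass2]
    refine hsing.mono_ac Measure.AbsolutelyContinuous.rfl ?_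
    refine Measure.AbsolutelyContinuous.add_left ?_ habs
    exact (withDensity_absolutelyContinuous _ _).trans Measure.absolutelyContinuous_restrict
  have hmin := h7_min hΩb v vt hvc hvtc Y1 Y2 h1 h2 hs
  have hone := h7_memE_norm (V := V) (Ω := Ω) (ψ := fun _ => 1) continuous_const
    (fun _ => by simp)
  have n1 := h1 _ hone
  have n2 := h2 _ hone
  set A := (∫ x in Ω, ∫ z, (1:ℝ) * ‖z‖ ∂(Y1.osc x)) +
        ∫ x, (∫ ζ, urecx (fun _ (z : V) => (1:ℝ) * ‖z‖) x (ζ : V) ∂(Y1.ang x)) ∂Y1.conc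
  set B := (∫ x in Ω, ∫ z, (1:ℝ) * ‖z‖ ∂(Y2.osc x)) +
        ∫ x, (∫ ζ, urecx (fun _ (z : V) => (1:ℝ) * ‖z‖) x (ζ : V) ∂(Y2.ang x)) ∂Y2.conc
  simp only [one_mul] at n1 n2
  have hΦc := hΦ.1
  have hcomp : ∀ w : Dom n → V, Continuous w → IntegrableOn (fun x => Φ x (w x)) Ω :=
    fun w hw => h7_intOn hΩb (hΦc.comp (continuous_id.prodMk hw))
  have i0 := hcomp (fun _ => 0) continuous_const
  have hD : Tendsto (fun j => (∫ x in Ω, Φ x (v j x + vt j x)) - (∫ x in Ω, Φ x (v j x))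
      - (∫ x in Ω, Φ x (vt j x)) + ∫ x in Ω, Φ x 0) atTop (𝓝 0) := by
    rw [Metric.tendsto_nhds]
    intro ε hε
    obtain ⟨δ, hδ, hδε⟩ : ∃ δ : ℝ, 0 < δ ∧ δ * (volume.real Ω * 2 + A + B) < ε := by
      refine ⟨ε / (2 * (|volume.real Ω * 2 + A + B| + 1)), by positivity, ?_⟩
      rw [div_mul_eq_mul_div, div_lt_iff₀ (by positivity)]
      nlinarith [le_abs_self (volume.real Ω * 2 + A + B),
        abs_nonneg (volume.real Ω * 2 + A + B)]
    obtain ⟨C, hC0, hC⟩ := h7_key hΩb hΦ hδ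
    have hlim : Tendsto (fun j => δ * (volume.real Ω * 2 + (∫ x in Ω, ‖v j x‖) +
        ∫ x in Ω, ‖vt j x‖) + C * ∫ x in Ω, min ‖v j x‖ ‖vt j x‖) atTop
        (𝓝 (δ * (volume.real Ω * 2 + A + B) + C * 0)) :=
      (((n1.const_add _).add n2).const_mul δ).add (hmin.const_mul C)
    rw [mul_zero, add_zero] at hlim
    filter_upwards [hlim.eventually_lt_const hδε] with j hj
    refine lt_of_le_of_lt ?_ hj
    have hvj := hvc j
    have hvtj := hvtc j
    have i1 := hcomp _ hvj
    have i2 := hcomp _ hvtj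
    have i3 := hcomp _ (hvj.add hvtj)
    have k1 := h7_intOn hΩb (f := fun x => ‖v j x‖) (by fun_prop)
    have k2 := h7_intOn hΩb (f := fun x => ‖vt j x‖) (by fun_prop)
    have k3 := h7_intOn hΩb (f := fun x => min ‖v j x‖ ‖vt j x‖) (by fun_prop)
    have k0 := h7_intOn hΩb (f := fun _ : Dom n => (2:ℝ)) (by fun_prop)
    have i3' : IntegrableOn (fun x => Φ x (v j x + vt j x)) Ω := i3
    have i31 : IntegrableOn (fun x => Φ x (v j x + vt j x) - Φ x (v j x)) Ω := i3.sub i1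
    have i312 : IntegrableOn (fun x => Φ x (v j x + vt j x) - Φ x (v j x) - Φ x (vt j x)) Ω :=
      i31.sub i2
    have k01 : IntegrableOn (fun x => 2 + ‖v j x‖) Ω := k0.add k1
    have k012 : IntegrableOn (fun x => 2 + ‖v j x‖ + ‖vt j x‖) Ω := k01.add k2
    have e1 : (∫ x in Ω, Φ x (v j x + vt j x)) - (∫ x in Ω, Φ x (v j x))
        - (∫ x in Ω, Φ x (vt j x)) + (∫ x in Ω, Φ x 0) =
        ∫ x in Ω, (Φ x (v j x + vt j x) - Φ x (v j x) - Φ x (vt j x) + Φ x 0) := by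
      rw [integral_add i312 i0, integral_sub i31 i2, integral_sub i3' i1]
    have e2 : δ * (volume.real Ω * 2 + (∫ x in Ω, ‖v j x‖) +
        ∫ x in Ω, ‖vt j x‖) + C * ∫ x in Ω, min ‖v j x‖ ‖vt j x‖ =
        ∫ x in Ω, (δ * (2 + ‖v j x‖ + ‖vt j x‖) + C * min ‖v j x‖ ‖vt j x‖) := by
      rw [integral_add (k012.const_mul δ) (k3.const_mul C),
        integral_const_mul, integral_const_mul, integral_add k01 k2, integral_add k0 k1]
      simp
    rw [Real.dist_eq, sub_zero, e1, e2, ← Real.norm_eq_abs]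
    refine norm_integral_le_of_norm_le
      ((k012.const_mul δ).add (k3.const_mul C)) ?_
    filter_upwards [ae_restrict_mem hΩo.measurableSet] with x hx
    exact hC x (subset_closure hx) _ _
  have hI1 := h7_integrable Y1 hΦ
  have hI2 := h7_integrable Y2 hΦ
  simp only [hang] at hI2
  have T1 := h1 Φ hΦ
  have T2 := h2 Φ hΦ
  have hz : ∫ x in Ω, ∫ z, Φ x z ∂(Y2.osc x) = ∫ x in Ω, Φ x 0 := by
    refine setIntegral_congr_fun hΩo.measurableSet fun x hx => ?_
    simp only [hY2osc x hx, integral_dirac]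
  rw [hz] at T2
  simp only [hang] at T2
  rw [hosc, hconc, hYang, integral_add_measure hI1 hI2]
  have := ((hD.add T1).add T2).sub_const (∫ x in Ω, Φ x 0)
  convert this using 2
  · ring
  · ring



end
end

section
/- Let f : 𝕍 → ℝ be 𝒜-quasiconvex and of linear growth. Then there exists a sequence of integrands f_j ∈ ℍ, each 𝒜-quasiconvex, such that f_j(z) ≥ f_{j+1}(z) for all j and z, and f_j(z) ↓ f(z) pointwise in z ∈ 𝕍 as j → ∞. -/
open MeasureTheory Filter Topology

noncomputable section

/-! ## Statement 9: monotone approximation by quasiconvex integrands of class ℍ -/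

lemma unitCube_volume (n : ℕ) : (volume (unitCube n)) = 1 := by
  unfold unitCube
  rw [Real.volume_pi_Ioo]
  norm_num

lemma integrableOn_unitCube {n : ℕ} {E : Type*} [NormedAddCommGroup E]
    (g : Dom n → E) (hg : Continuous g) : IntegrableOn g (unitCube n) := by
  have hc : IsCompact (closedUnitCube n) := isCompact_univ_pi fun _ => isCompact_Icc
  exact (hg.continuousOn.integrableOn_compact hc).mono_set
    (Set.pi_mono fun _ _ => Set.Ioo_subset_Icc_self)

theorem stmt9 {n k : ℕ} (hn : 0 < n) (hk : 0 < k)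
    {V W : Type*} [NormedAddCommGroup V] [InnerProductSpace ℝ V] [FiniteDimensional ℝ V]
    [NormedAddCommGroup W] [InnerProductSpace ℝ W] [FiniteDimensional ℝ W]
    (A : (Fin n → ℕ) → (V →L[ℝ] W))
    (f : V → ℝ) (hqc : AQuasiconvex A k f) (hg : LinearGrowth f) :
    ∃ F : ℕ → V → ℝ, (∀ j, MemH (F j) ∧ AQuasiconvex A k (F j)) ∧
      (∀ j z, F (j+1) z ≤ F j z) ∧
      ∀ z, Tendsto (fun j => F j z) atTop (𝓝 (f z)) := by
  obtain ⟨c₀, hc₀⟩ := hg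
  obtain ⟨hfc, hfq⟩ := hqc
  set c : ℝ := |c₀| with hcdef
  have hcn : 0 ≤ c := abs_nonneg _
  have hc : ∀ z, |f z| ≤ c * (1 + ‖z‖) := fun z =>
    (hc₀ z).trans (mul_le_mul_of_nonneg_right (le_abs_self _) (by positivity))
  refine ⟨fun j z => max (f z) (2 * c * ‖z‖ - j), ?_, ?_, ?_⟩
  · intro j
    have hcont : Continuous fun z : V => max (f z) (2 * c * ‖z‖ - j) := by fun_prop
    have hb : ∀ z, |max (f z) (2 * c * ‖z‖ - j) - 2 * c * ‖z‖| ≤ c + j := by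
      intro z
      have h1 := (abs_le.1 (hc z)).2
      have h2 : 0 ≤ c * ‖z‖ := by positivity
      have h3 : (0:ℝ) ≤ j := by positivity
      rw [abs_le]
      constructor
      · linarith [le_max_right (f z) (2 * c * ‖z‖ - j)]
      · have : max (f z) (2 * c * ‖z‖ - j) ≤ c + j + 2 * c * ‖z‖ :=
          max_le (by nlinarith) (by linarith)
        linarith
    refine ⟨⟨hcont, ⟨2 * c + (c + j), fun z => ?_⟩, fun z => 2 * c * ‖z‖, ?_⟩, hcont, ?_⟩
    · have h := abs_le.1 (hb z)
      have h2 : 0 ≤ c * ‖z‖ := by positivity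
      have h3 : (0:ℝ) ≤ j * ‖z‖ := by positivity
      rw [abs_le]
      constructor <;> nlinarith
    · apply TendstoUniformly.tendstoLocallyUniformly
      rw [Metric.tendstoUniformly_iff]
      intro ε hε
      filter_upwards [eventually_gt_atTop (0:ℝ), eventually_gt_atTop ((c + j) / ε)] with t ht hte z
      have h := hb (t • z)
      rw [norm_smul, Real.norm_of_nonneg ht.le] at h
      rw [dist_comm, Real.dist_eq]
      simp only [norm_smul, Real.norm_of_nonneg ht.le]
      have e : max (f (t • z)) (2 * c * (t * ‖z‖) - j) / t - 2 * c * ‖z‖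
          = (max (f (t • z)) (2 * c * (t * ‖z‖) - j) - 2 * c * (t * ‖z‖)) / t := by
        field_simp
      rw [e, abs_div, abs_of_pos ht, div_lt_iff₀ ht]
      rw [div_lt_iff₀ hε] at hte
      linarith
    · intro z v hv hper hint hA
      have hvc : Continuous v := hv.continuous
      have hI : IntegrableOn (fun x => max (f (z + v x)) (2 * c * ‖z + v x‖ - j)) (unitCube n) :=
        integrableOn_unitCube _ (by fun_prop)
      have hvol : volume.real (unitCube n) = 1 := by
        simp [Measure.real, unitCube_volume]
      apply max_le
      · refine (hfq z v hv hper hint hA).trans ?_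
        exact integral_mono (integrableOn_unitCube _ (by fun_prop)) hI fun x => le_max_left _ _
      · have hz : ∫ x in unitCube n, (z + v x) = z := by
          rw [integral_add (integrableOn_unitCube _ (by fun_prop)) (integrableOn_unitCube _ hvc),
            hint, setIntegral_const, hvol]
          simp
        have hn1 : ‖z‖ ≤ ∫ x in unitCube n, ‖z + v x‖ := by
          conv_lhs => rw [← hz]
          exact norm_integral_le_integral_norm _
        have h2 : ∫ x in unitCube n, (2 * c * ‖z + v x‖ - j)
            = 2 * c * (∫ x in unitCube n, ‖z + v x‖) - j := by
          rw [integral_sub (integrableOn_unitCube _ (by fun_prop))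
            (integrableOn_unitCube _ (by fun_prop)), setIntegral_const, hvol,
            integral_const_mul]
          simp
        calc 2 * c * ‖z‖ - j ≤ 2 * c * (∫ x in unitCube n, ‖z + v x‖) - j := by gcongr
          _ = ∫ x in unitCube n, (2 * c * ‖z + v x‖ - j) := h2.symm
          _ ≤ _ := integral_mono (integrableOn_unitCube _ (by fun_prop)) hI
            fun x => le_max_right _ _
  · intro j z
    refine max_le_max le_rfl ?_
    push_cast
    linarith
  · intro z
    obtain ⟨N, hN⟩ := exists_nat_ge (2 * c * ‖z‖ - f z)
    apply tendsto_const_nhds.congr'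
    filter_upwards [eventually_ge_atTop N] with j hj
    have : (N:ℝ) ≤ j := by exact_mod_cast hj
    rw [max_eq_left]
    linarith


end
end

section
/- Assume 𝒜, ℬ as in the context with Λ_𝒜 spanning. Let z ∈ 𝕍, t > 0, and suppose (ν⁰, t ν^∞) ∈ Y(z), where ν⁰ is a Borel probability measure on 𝕍 with finite first moment and ν^∞ a Borel probability measure on 𝕊_𝕍. Then for every 𝒜-quasiconvex F ∈ ℍ, writing D = { F'(z₀) : z₀ a point of differentiability of F } ⊂ 𝕍 and G(w) = sup_{ζ ∈ D} ζ·w for its support function, one has G(ν̄^∞) ≤ ∫_{𝕊_𝕍} F^∞ dν^∞, where ν̄^∞ is the first moment of ν^∞. Moreover D is bounded, with sup_{ζ∈D} |ζ| equal to the least Lipschitz constant of F. -/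
open MeasureTheory Filter Topology

noncomputable section

section DiffOps

/-- smooth functions as a submodule -/
def SM (n : ℕ) (V : Type*) [NormedAddCommGroup V] [NormedSpace ℝ V] : Submodule ℝ (Dom n → V) where
  carrier := {u | ContDiff ℝ (⊤ : ℕ∞) u}
  add_mem' := by
    intro a b ha hb
    have ha : ContDiff ℝ (⊤ : ℕ∞) a := ha
    exact ha.add hb
  zero_mem' := by
    change ContDiff ℝ (⊤ : ℕ∞) (fun _ => (0:V))
    exact contDiff_const
  smul_mem' := by
    intro c a ha
    have ha : ContDiff ℝ (⊤ : ℕ∞) a := ha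
    exact ha.const_smul c

variable {n : ℕ} {V W : Type*} [NormedAddCommGroup V] [NormedSpace ℝ V]
  [NormedAddCommGroup W] [NormedSpace ℝ W]

theorem SM.sm (u : SM n V) : ContDiff ℝ (⊤ : ℕ∞) u.1 := u.2

theorem pderivDir_smooth {u : Dom n → V} (hu : ContDiff ℝ (⊤ : ℕ∞) u) (j : Fin n) :
    ContDiff ℝ (⊤ : ℕ∞) (pderivDir j u) := by
  unfold pderivDir
  exact (hu.fderiv_right (m := (⊤ : ℕ∞)) (by simp)).clm_apply contDiff_const

theorem smooth_diff {u : Dom n → V} (hu : ContDiff ℝ (⊤ : ℕ∞) u) : Differentiable ℝ u :=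
  hu.differentiable (by simp)

/-- derivative as an endomorphism -/
def DD (j : Fin n) : Module.End ℝ (SM n V) where
  toFun u := ⟨pderivDir j u.1, pderivDir_smooth u.2 j⟩
  map_add' u v := by
    ext x
    have := fderiv_add (smooth_diff u.2 x) (smooth_diff v.2 x)
    simp only [pderivDir, Submodule.coe_add, Pi.add_apply]
    rw [this]; rfl
  map_smul' c u := by
    ext x
    have := fderiv_const_smul (smooth_diff u.2 x) c
    simp only [pderivDir, Submodule.coe_smul, Pi.smul_apply, RingHom.id_apply]
    rw [this]; rfl

theorem DD_coe (j : Fin n) (u : SM n V) : (DD j u : Dom n → V) = pderivDir j u.1 := rfl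

theorem DD_comm (i j : Fin n) : Commute (DD i : Module.End ℝ (SM n V)) (DD j) := by
  apply LinearMap.ext
  intro u
  ext x
  have h1 : Differentiable ℝ (fderiv ℝ u.1) :=
    ((SM.sm u).fderiv_right (m := (⊤ : ℕ∞)) (by simp)).differentiable (by simp)
  have key : ∀ a b : Fin n, pderivDir a (pderivDir b u.1) x =
      fderiv ℝ (fderiv ℝ u.1) x (Pi.single a 1) (Pi.single b 1) := by
    intro a b
    unfold pderivDir
    rw [fderiv_clm_apply (h1 x) (differentiableAt_const _)]
    simp
  have hs : IsSymmSndFDerivAt ℝ u.1 x :=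
    ContDiffAt.isSymmSndFDerivAt (n := 2) (ContDiff.contDiffAt (ContDiff.of_le (SM.sm u) ((WithTop.coe_le_coe (b := (2:ℕ∞))).2 le_top))) (by simp)
  change pderivDir i (pderivDir j u.1) x = pderivDir j (pderivDir i u.1) x
  rw [key, key]
  exact hs _ _

/-- multi-derivative over a list -/
def MDL (L : List (Fin n)) (α : Fin n → ℕ) : Module.End ℝ (SM n V) :=
  (L.map (fun j => (DD j : Module.End ℝ (SM n V)) ^ α j)).prod

theorem DD_pow_coe (j : Fin n) (m : ℕ) (u : SM n V) :
    (((DD j : Module.End ℝ (SM n V)) ^ m) u : Dom n → V) = (pderivDir j)^[m] u.1 := by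
  induction m with
  | zero => rfl
  | succ m ih =>
    rw [pow_succ', Function.iterate_succ_apply', ← ih]; rfl

theorem MDL_coe (L : List (Fin n)) (α : Fin n → ℕ) (u : SM n V) :
    (MDL L α u : Dom n → V) = L.foldr (fun j f => (pderivDir j)^[α j] f) u.1 := by
  induction L with
  | nil => rfl
  | cons j L ih =>
    have : (MDL (j :: L) α u) = ((DD j : Module.End ℝ (SM n V)) ^ α j) (MDL L α u) := by
      simp [MDL]
    rw [this, DD_pow_coe, List.foldr_cons, ih]

theorem MDL_add (L : List (Fin n)) (α β : Fin n → ℕ) :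
    (MDL L (α + β) : Module.End ℝ (SM n V)) = MDL L α * MDL L β := by
  induction L with
  | nil => simp [MDL]
  | cons j L ih =>
    have h : ∀ γ, (MDL (j :: L) γ : Module.End ℝ (SM n V)) = DD j ^ γ j * MDL L γ := by
      intro γ; simp [MDL]
    have hc : Commute (DD j ^ β j) (MDL L α : Module.End ℝ (SM n V)) := by
      apply Commute.list_prod_right
      intro y hy
      obtain ⟨i, _, rfl⟩ := List.mem_map.1 hy
      exact (DD_comm j i).pow_pow _ _
    rw [h, h, h, ih, Pi.add_apply, pow_add]
    calc _ = DD j ^ α j * (DD j ^ β j * MDL L α) * MDL L β := by simp only [mul_assoc]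
      _ = _ := by rw [hc.eq]; simp only [mul_assoc]

/-- post composition with a linear map -/
def LC (T : V →L[ℝ] W) : SM n V →ₗ[ℝ] SM n W where
  toFun u := ⟨fun x => T (u.1 x), T.contDiff.comp (SM.sm u)⟩
  map_add' u v := by ext x; simp
  map_smul' c u := by ext x; simp

theorem DD_LC (T : V →L[ℝ] W) (j : Fin n) (u : SM n V) : DD j (LC T u) = LC T (DD j u) := by
  ext x
  change fderiv ℝ (fun x => T (u.1 x)) x _ = T (fderiv ℝ u.1 x _)
  have := (T.hasFDerivAt.comp x (smooth_diff u.2 x).hasFDerivAt).fderiv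
  change fderiv ℝ (fun x => T (u.1 x)) x = _ at this
  rw [this]; rfl

theorem MDL_LC (L : List (Fin n)) (α : Fin n → ℕ) (T : V →L[ℝ] W) (u : SM n V) :
    MDL L α (LC T u) = LC T (MDL L α u) := by
  induction L with
  | nil => simp [MDL]
  | cons j L ih =>
    have h2 : ∀ (m : ℕ) (u : SM n V), (DD j ^ m : Module.End ℝ (SM n W)) (LC T u) =
        LC T ((DD j ^ m : Module.End ℝ (SM n V)) u) := by
      intro m
      induction m with
      | zero => intro u; rfl
      | succ m ih =>
        intro u
        rw [pow_succ, pow_succ, Module.End.mul_apply, Module.End.mul_apply, DD_LC, ih]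
    have e1 : MDL (j :: L) α (LC T u) = ((DD j : Module.End ℝ (SM n W)) ^ α j) (MDL L α (LC T u)) := by
      simp [MDL]
    have e2 : MDL (j :: L) α u = ((DD j : Module.End ℝ (SM n V)) ^ α j) (MDL L α u) := by
      simp [MDL]
    rw [e1, e2, ih, h2]

abbrev MD (α : Fin n → ℕ) : Module.End ℝ (SM n V) := MDL (List.finRange n) α

theorem mderiv_eq (α : Fin n → ℕ) (u : SM n V) : mderiv α u.1 = (MD α u).1 :=
  (MDL_coe _ _ _).symm

/-- operator on smooth functions -/
def OP (A : (Fin n → ℕ) → (V →L[ℝ] W)) (k : ℕ) : SM n V →ₗ[ℝ] SM n W :=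
  ∑ α ∈ degSet n k, (LC (A α)).comp (MD α)

theorem OP_coe (A : (Fin n → ℕ) → (V →L[ℝ] W)) (k : ℕ) (u : SM n V) :
    opApply A k u.1 = (OP A k u).1 := by
  ext x
  simp only [opApply, OP, mderiv_eq, LinearMap.sum_apply]
  rw [AddSubmonoidClass.coe_finsetSum, Finset.sum_apply]
  rfl

theorem OP_comp_zero {U : Type*} [NormedAddCommGroup U] [NormedSpace ℝ U] 
    (A : (Fin n → ℕ) → (V →L[ℝ] W)) (B : (Fin n → ℕ) → (U →L[ℝ] V)) (k l : ℕ)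
    (hsym : ∀ ξ u, opSymbol A k ξ (opSymbol B l ξ u) = 0) (u : SM n U) :
    OP A k (OP B l u) = 0 := by
  classical
  have hco : ∀ (γ : Fin n → ℕ) (y : U), ∑ p ∈ (degSet n k ×ˢ degSet n l).filter (fun p => p.1 + p.2 = γ),
      A p.1 (B p.2 y) = 0 := by
    intro γ y
    apply SeparatingDual.eq_zero_of_forall_dual_eq_zero (R := ℝ)
    intro f
    let P : MvPolynomial (Fin n) ℝ := ∑ p ∈ degSet n k ×ˢ degSet n l,
      MvPolynomial.monomial (Finsupp.equivFunOnFinite.symm (p.1 + p.2)) (f (A p.1 (B p.2 y)))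
    have hP : P = 0 := by
      apply MvPolynomial.funext
      intro ξ
      have h0 := congrArg f (hsym ξ y)
      simp only [opSymbol, sum_apply, smul_apply, map_sum,
        map_smul, map_zero, smul_eq_mul] at h0
      rw [map_zero, ← h0]
      simp only [P, map_sum, MvPolynomial.eval_monomial]
      rw [Finset.sum_product_right]
      refine Finset.sum_congr rfl fun b _ => ?_
      rw [Finset.mul_sum]
      refine Finset.sum_congr rfl fun a _ => ?_
      rw [Finsupp.prod_fintype _ _ (by simp)]
      simp only [Finsupp.equivFunOnFinite_symm_apply_apply, Pi.add_apply, pow_add, Finset.prod_mul_distrib]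
      ring
    have h1 := congrArg (MvPolynomial.coeff (Finsupp.equivFunOnFinite.symm γ)) hP
    simp only [P, MvPolynomial.coeff_sum, MvPolynomial.coeff_monomial, MvPolynomial.coeff_zero,
      EmbeddingLike.apply_eq_iff_eq] at h1
    rw [map_sum, Finset.sum_filter]
    exact h1
  have hexp : ∀ x, (OP A k (OP B l u)).1 x = ∑ p ∈ degSet n k ×ˢ degSet n l,
      A p.1 (B p.2 ((MD (p.1 + p.2) u).1 x)) := by
    intro x
    rw [Finset.sum_product]
    simp only [OP, LinearMap.sum_apply, map_sum]
    rw [AddSubmonoidClass.coe_finsetSum, Finset.sum_apply, Finset.sum_comm]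
    refine Finset.sum_congr rfl fun a _ => ?_
    rw [AddSubmonoidClass.coe_finsetSum, Finset.sum_apply]
    refine Finset.sum_congr rfl fun b _ => ?_
    simp only [LinearMap.comp_apply, MDL_LC, MD, MDL_add]
    rfl
  ext x
  rw [hexp, ← Finset.sum_fiberwise_of_maps_to (g := fun p => p.1 + p.2)
    (t := (degSet n k ×ˢ degSet n l).image (fun p => p.1 + p.2))
    (fun p hp => Finset.mem_image_of_mem _ hp)]
  change _ = (0 : W)
  refine Finset.sum_eq_zero fun γ _ => ?_
  rw [← hco γ ((MD γ u).1 x)]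
  refine Finset.sum_congr rfl fun p hp => ?_
  rw [(Finset.mem_filter.1 hp).2]

/-- vanishing mean of derivatives -/
theorem integral_pderivDir_zero {u : Dom n → V} (hu : ContDiff ℝ (⊤ : ℕ∞) u)
    (hc : HasCompactSupport u) (j : Fin n) : ∫ x, pderivDir j u x = 0 := by
  have h := integral_smul_fderiv_eq_neg_fderiv_smul_of_integrable (𝕜 := ℝ) (μ := (volume : Measure (Dom n)))
    (f := fun _ => (1:ℝ)) (g := u) (v := Pi.single j 1) ?_ ?_ ?_ ?_ ?_
  · simpa [pderivDir] using h
  · simp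
  · simp only [one_smul]
    exact (pderivDir_smooth hu j).continuous.integrable_of_hasCompactSupport
      (hc.fderiv_apply (𝕜 := ℝ) _)
  · simp only [one_smul]
    exact hu.continuous.integrable_of_hasCompactSupport hc
  · exact fun x _ => differentiableAt_const _
  · exact fun x _ => smooth_diff hu x

theorem supp_DD_pow (j : Fin n) (m : ℕ) (u : SM n V) :
    tsupport (((DD j : Module.End ℝ (SM n V)) ^ m) u).1 ⊆ tsupport u.1 := by
  induction m with
  | zero => exact subset_rfl
  | succ m ih =>
    rw [pow_succ', Module.End.mul_apply]
    exact (tsupport_fderiv_apply_subset ℝ _).trans ih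

theorem supp_MDL (L : List (Fin n)) (α : Fin n → ℕ) (u : SM n V) :
    tsupport (MDL L α u).1 ⊆ tsupport u.1 := by
  induction L with
  | nil => exact subset_rfl
  | cons j L ih =>
    have e2 : MDL (j :: L) α u = ((DD j : Module.End ℝ (SM n V)) ^ α j) (MDL L α u) := by
      simp [MDL]
    rw [e2]
    exact (supp_DD_pow _ _ _).trans ih

theorem integral_MDL_zero (L : List (Fin n)) (α : Fin n → ℕ) (u : SM n V)
    (hc : HasCompactSupport u.1) (h : ∃ j ∈ L, α j ≠ 0) : ∫ x, (MDL L α u).1 x = 0 := by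
  induction L with
  | nil => simp at h
  | cons j L ih =>
    have e2 : MDL (j :: L) α u = ((DD j : Module.End ℝ (SM n V)) ^ α j) (MDL L α u) := by
      simp [MDL]
    rw [e2]
    by_cases hj : α j = 0
    · rw [hj, pow_zero, Module.End.one_apply]
      apply ih
      obtain ⟨i, hi, hi'⟩ := h
      rcases List.mem_cons.1 hi with rfl | hi
      · exact absurd hj hi'
      · exact ⟨i, hi, hi'⟩
    · obtain ⟨m, hm⟩ := Nat.exists_eq_succ_of_ne_zero hj
      rw [hm, Nat.succ_eq_add_one, pow_succ', Module.End.mul_apply]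
      apply integral_pderivDir_zero (Subtype.prop _)
      exact hc.mono' (subset_closure.trans ((supp_DD_pow _ _ _).trans (supp_MDL _ _ _)))

theorem supp_OP (A : (Fin n → ℕ) → (V →L[ℝ] W)) (k : ℕ) (u : SM n V) :
    Function.support (OP A k u).1 ⊆ tsupport u.1 := by
  intro x hx
  by_contra hx'
  apply hx
  rw [← OP_coe]
  unfold opApply
  refine Finset.sum_eq_zero fun α _ => ?_
  rw [mderiv_eq, image_eq_zero_of_notMem_tsupport (fun h => hx' (supp_MDL _ _ _ h)), map_zero]

theorem degSet_exists_ne {k : ℕ} (hk : 0 < k) {α : Fin n → ℕ} (hα : α ∈ degSet n k) : ∃ j, α j ≠ 0 := by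
  by_contra! h
  have := (Finset.mem_filter.1 hα).2
  simp [h] at this
  omega

theorem integral_OP_zero [FiniteDimensional ℝ V] [FiniteDimensional ℝ W]
    (A : (Fin n → ℕ) → (V →L[ℝ] W)) {k : ℕ} (hk : 0 < k) (u : SM n V)
    (hc : HasCompactSupport u.1) : ∫ x, (OP A k u).1 x = 0 := by
  have := FiniteDimensional.complete ℝ V
  have := FiniteDimensional.complete ℝ W
  have hint : ∀ α, Integrable (MD α u).1 := fun α =>
    (SM.sm (MD α u)).continuous.integrable_of_hasCompactSupport
      (hc.mono' (subset_closure.trans (supp_MDL _ _ _)))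
  have e : ∀ x, (OP A k u).1 x = ∑ α ∈ degSet n k, A α ((MD α u).1 x) := by
    intro x; rw [← OP_coe]; simp only [opApply, mderiv_eq]
  simp_rw [e]
  rw [integral_finsetSum _ (fun α _ => (A α).integrable_comp (hint α))]
  refine Finset.sum_eq_zero fun α hα => ?_
  rw [ContinuousLinearMap.integral_comp_comm _ (hint α)]
  obtain ⟨j, hj⟩ := degSet_exists_ne hk hα
  rw [integral_MDL_zero _ _ _ hc ⟨j, List.mem_finRange j, hj⟩, map_zero]

end DiffOps
section Periodize

variable {n : ℕ} {V W : Type*} [NormedAddCommGroup V] [NormedSpace ℝ V]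
  [NormedAddCommGroup W] [NormedSpace ℝ W]

/-- coordinatewise rounding -/
def rnd (x : Dom n) : Dom n := fun i => (round (x i) : ℝ)

/-- periodic extension -/
def perx (g : Dom n → V) : Dom n → V := fun x => g (x - rnd x)

theorem perx_periodic (g : Dom n → V) : ZPeriodic (perx g) := by
  intro x m
  unfold perx
  congr 1
  ext i
  simp [rnd, round_add_intCast]

theorem round_eq_of_abs {y : ℝ} {m : ℤ} (h : y - m ∈ Set.Ioo (-(1/2) : ℝ) (1/2)) : round y = m := by
  rw [round_eq, Int.floor_eq_iff]
  constructor <;> linarith [h.1, h.2]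

theorem perx_cube (g : Dom n → V) {x : Dom n} (hx : x ∈ unitCube n) : perx g x = g x := by
  unfold perx
  congr 1
  ext i
  have : round (x i) = 0 := round_eq_of_abs (by simpa using hx i (Set.mem_univ i))
  simp [rnd, this]

theorem perx_local (g : Dom n → V) {K : Set (Dom n)} (hK : IsCompact K) (hKc : K ⊆ unitCube n)
    (hg : ∀ x, x ∉ K → g x = 0) (x0 : Dom n) :
    ∃ a : Dom n, perx g =ᶠ[𝓝 x0] fun y => g (y - a) := by
  refine ⟨rnd x0, ?_⟩
  by_cases h : x0 - rnd x0 ∈ unitCube n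
  · have ho : IsOpen (unitCube n) := isOpen_set_pi Set.finite_univ fun _ _ => isOpen_Ioo
    have : ∀ᶠ y in 𝓝 x0, y - rnd x0 ∈ unitCube n :=
      (continuous_id.sub continuous_const).continuousAt.eventually_mem (ho.mem_nhds h)
    filter_upwards [this] with y hy
    unfold perx
    congr 1
    ext i
    have : round (y i) = round (x0 i) := round_eq_of_abs (hy i (Set.mem_univ i))
    simp [rnd, this]
  · have h1 : ∀ᶠ y in 𝓝 x0, y - rnd x0 ∈ Kᶜ :=
      (continuous_id.sub continuous_const).continuousAt.eventually_mem
        (hK.isClosed.isOpen_compl.mem_nhds (fun h' => h (hKc h')))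
    have h2 : ∃ i, (1/2 : ℝ) ≤ |x0 i - round (x0 i)| := by
      by_contra! h'
      exact h fun i _ => abs_lt.1 (h' i)
    obtain ⟨i, hi⟩ := h2
    have h3 : ∃ c < (1/2:ℝ), ∀ x ∈ K, |x i| ≤ c := by
      rcases K.eq_empty_or_nonempty with rfl | hne
      · exact ⟨0, by norm_num, by simp⟩
      · obtain ⟨x, hx, hm⟩ := hK.exists_isMaxOn hne (f := fun x : Dom n => |x i|)
          (by fun_prop)
        exact ⟨|x i|, abs_lt.2 (hKc hx i (Set.mem_univ i)), fun y hy => hm hy⟩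
    obtain ⟨c, hc, hcK⟩ := h3
    have h4 : ∀ᶠ y in 𝓝 x0, |x0 i - y i| < 1/2 - c := by
      have : Tendsto (fun y : Dom n => |x0 i - y i|) (𝓝 x0) (𝓝 |x0 i - x0 i|) := by
        apply Continuous.tendsto; fun_prop
      apply this.eventually_lt_const
      simp; linarith
    filter_upwards [h1, h4] with y hy1 hy2
    rw [hg _ hy1]
    apply hg
    intro hy
    have e1 := hcK _ hy
    simp only [Pi.sub_apply, rnd] at e1
    have e2 := round_le (x0 i) (round (y i))
    have e3 := abs_sub_le (x0 i) (y i) (round (y i))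
    linarith

theorem perx_smooth (g : Dom n → V) {K : Set (Dom n)} (hK : IsCompact K) (hKc : K ⊆ unitCube n)
    (hg : ∀ x, x ∉ K → g x = 0) (hs : ContDiff ℝ (⊤ : ℕ∞) g) : ContDiff ℝ (⊤ : ℕ∞) (perx g) := by
  rw [contDiff_iff_contDiffAt]
  intro x
  obtain ⟨a, ha⟩ := perx_local g hK hKc hg x
  exact ContDiffAt.congr_of_eventuallyEq
    (hs.comp (contDiff_id.sub contDiff_const)).contDiffAt ha

theorem foldr_congr (L : List (Fin n)) (α : Fin n → ℕ) {u v : Dom n → V} {x : Dom n}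
    (h : u =ᶠ[𝓝 x] v) : L.foldr (fun j f => (pderivDir j)^[α j] f) u =ᶠ[𝓝 x]
      L.foldr (fun j f => (pderivDir j)^[α j] f) v := by
  induction L with
  | nil => exact h
  | cons j L ih =>
    rw [List.foldr_cons, List.foldr_cons]
    generalize α j = m
    induction m with
    | zero => exact ih
    | succ m ih2 =>
      rw [Function.iterate_succ_apply', Function.iterate_succ_apply']
      filter_upwards [ih2.fderiv (𝕜 := ℝ)] with y hy
      simp only [pderivDir, hy]

theorem foldr_translate (L : List (Fin n)) (α : Fin n → ℕ) (u : Dom n → V) (a : Dom n) :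
    L.foldr (fun j f => (pderivDir j)^[α j] f) (fun y => u (y - a)) =
      fun y => L.foldr (fun j f => (pderivDir j)^[α j] f) u (y - a) := by
  induction L with
  | nil => rfl
  | cons j L ih =>
    rw [List.foldr_cons, List.foldr_cons, ih]
    generalize α j = m
    induction m with
    | zero => rfl
    | succ m ih2 =>
      rw [Function.iterate_succ_apply', Function.iterate_succ_apply', ih2]
      ext y
      simp only [pderivDir]
      rw [fderiv_comp_sub]

theorem opApply_local (A : (Fin n → ℕ) → (V →L[ℝ] W)) (k : ℕ) {u g : Dom n → V} {x a : Dom n}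
    (h : u =ᶠ[𝓝 x] fun y => g (y - a)) : opApply A k u x = opApply A k g (x - a) := by
  unfold opApply
  refine Finset.sum_congr rfl fun α _ => ?_
  have h1 := (foldr_congr (List.finRange n) α h).eq_of_nhds
  rw [foldr_translate] at h1
  change A α (mderiv α u x) = A α (mderiv α g (x - a))
  congr 1

theorem opSymbol_zero (A : (Fin n → ℕ) → (V →L[ℝ] W)) {k : ℕ} (hk : 0 < k) :
    opSymbol A k 0 = 0 := by
  unfold opSymbol
  refine Finset.sum_eq_zero fun α hα => ?_
  obtain ⟨j, hj⟩ := degSet_exists_ne hk hα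
  rw [Finset.prod_eq_zero (Finset.mem_univ j) (by simp [hj]), zero_smul]

theorem jensen {U : Type*} [NormedAddCommGroup U] [NormedSpace ℝ U] [FiniteDimensional ℝ V]
    [FiniteDimensional ℝ U]
    (A : (Fin n → ℕ) → (V →L[ℝ] W)) (B : (Fin n → ℕ) → (U →L[ℝ] V)) {k l : ℕ} (hl : 0 < l)
    (hexact : ExactPotential A k B l) {F : V → ℝ} (hF : AQuasiconvex A k F)
    {u : Dom n → U} (hu : CcSmooth (unitCube n) u) (z : V) (s : ℝ) :
    F z ≤ ∫ x in unitCube n, F (z + s • opApply B l u x) := by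
  obtain ⟨hu1, hu2, hu3⟩ := hu
  let u' : SM n U := ⟨u, hu1⟩
  let g : SM n V := OP B l (s • u')
  have hgx : ∀ x, g.1 x = s • opApply B l u x := by
    intro x
    rw [show opApply B l u = (OP B l u').1 from OP_coe B l u']
    simp only [g, map_smul]; rfl
  have hsym : ∀ ξ u, opSymbol A k ξ (opSymbol B l ξ u) = 0 := by
    intro ξ u
    by_cases h : ξ = 0
    · rw [h, opSymbol_zero B hl]; simp
    · have : opSymbol B l ξ u ∈ LinearMap.range (opSymbol B l ξ : U →ₗ[ℝ] V) := ⟨u, rfl⟩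
      rw [← hexact ξ h] at this
      exact this
  have hsub : tsupport ((s • u' : SM n U).1) ⊆ tsupport u := by
    apply closure_mono
    intro x hx hx'
    apply hx
    change s • u x = 0
    rw [hx', smul_zero]
  have hg0 : ∀ x, x ∉ tsupport u → g.1 x = 0 := by
    intro x hx
    by_contra h
    exact hx (hsub (supp_OP B l (s • u') h))
  have hint : ∫ x, g.1 x = 0 := integral_OP_zero B hl _ (hu2.mono' (subset_closure.trans hsub))
  have hcube : MeasurableSet (unitCube n) :=
    (isOpen_set_pi Set.finite_univ fun _ _ => isOpen_Ioo).measurableSet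
  have := hF.2 z (perx g.1) (perx_smooth _ hu2.isCompact hu3 hg0 (SM.sm g)) (perx_periodic _) ?_ ?_
  · refine this.trans_eq (setIntegral_congr_fun hcube fun x hx => ?_)
    simp only [perx_cube _ hx, hgx]
  · rw [setIntegral_congr_fun hcube (fun x hx => perx_cube _ hx), ← hint]
    apply setIntegral_eq_integral_of_forall_compl_eq_zero
    intro x hx
    exact hg0 x fun h => hx (hu3 h)
  · intro x
    obtain ⟨a, ha⟩ := perx_local g.1 hu2.isCompact hu3 hg0 x
    rw [opApply_local A k ha, OP_coe, OP_comp_zero A B k l hsym]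
    rfl

end Periodize
section Lip

variable {n : ℕ} {V W : Type*} [NormedAddCommGroup V] [NormedSpace ℝ V]
  [NormedAddCommGroup W] [NormedSpace ℝ W]

theorem cube_open : IsOpen (unitCube n) := isOpen_set_pi Set.finite_univ fun _ _ => isOpen_Ioo

theorem cube_sub : unitCube n ⊆ closedUnitCube n :=
  Set.pi_mono fun _ _ => Set.Ioo_subset_Icc_self

theorem ccube_compact : IsCompact (closedUnitCube n) := isCompact_univ_pi fun _ => isCompact_Icc

theorem cube_vol : volume (unitCube n) = 1 := by
  unfold unitCube
  rw [volume_pi_pi]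
  simp [Real.volume_Ioo]
  norm_num

instance cube_prob : IsProbabilityMeasure ((volume : Measure (Dom n)).restrict (unitCube n)) :=
  ⟨by simp [cube_vol]⟩

theorem cube_int {f : Dom n → V} (hf : Continuous f) : IntegrableOn f (unitCube n) :=
  (hf.continuousOn.integrableOn_compact ccube_compact).mono_set cube_sub

theorem cube_zero {f : Dom n → ℝ} (hf : Continuous f) (h0 : ∀ x ∈ unitCube n, 0 ≤ f x)
    (hi : ∫ x in unitCube n, f x ≤ 0) : ∀ x ∈ unitCube n, f x = 0 := by
  have hnn : 0 ≤ᵐ[volume.restrict (unitCube n)] f :=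
    (ae_restrict_iff' cube_open.measurableSet).2 (Eventually.of_forall h0)
  have h1 : ∫ x in unitCube n, f x = 0 := le_antisymm hi (integral_nonneg_of_ae hnn)
  rw [integral_eq_zero_iff_of_nonneg_ae hnn (cube_int hf)] at h1
  exact Measure.eqOn_open_of_ae_eq h1 cube_open hf.continuousOn continuousOn_const

theorem maxp {c : Dom n → ℝ} (hc : Continuous c) (hc1 : ∀ x, |c x| ≤ 1) (hc0 : c 0 = 1)
    (hci : ∫ x in unitCube n, c x = 0) {ψ : ℝ → ℝ} (hψ : Continuous ψ)
    (h : ∀ a ε, ψ a ≤ ∫ x in unitCube n, ψ (a + ε * c x)) {p q : ℝ} 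
    (hp : ψ p ≤ 0) (hq : ψ q ≤ 0) : ∀ s ∈ Set.Icc p q, ψ s ≤ 0 := by
  by_contra! hcon
  obtain ⟨s, hs, hs0⟩ := hcon
  obtain ⟨b, hb, hbm⟩ := isCompact_Icc.exists_isMaxOn ⟨s, hs⟩ hψ.continuousOn
  have hM : 0 < ψ b := hs0.trans_le (hbm hs)
  have hTc : IsCompact (Set.Icc p q ∩ ψ ⁻¹' {ψ b}) :=
    isCompact_Icc.inter_right (isClosed_singleton.preimage hψ)
  obtain ⟨a, ⟨haI, haM⟩, hal⟩ := hTc.exists_isLeast ⟨b, hb, rfl⟩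
  have haM : ψ a = ψ b := haM
  have hap : p < a := lt_of_le_of_ne haI.1 (by rintro rfl; linarith)
  have haq : a < q := lt_of_le_of_ne haI.2 (by rintro rfl; linarith)
  set ε := min (a - p) (q - a) with hε
  have hε0 : 0 < ε := lt_min (by linarith) (by linarith)
  have hε1 : ε ≤ a - p := min_le_left _ _
  have hε2 : ε ≤ q - a := min_le_right _ _
  have hin : ∀ x, a + ε * c x ∈ Set.Icc p q := by
    intro x
    have := abs_le.1 (hc1 x)
    constructor <;> nlinarith
  have hcont : Continuous fun x => ψ (a + ε * c x) := by fun_prop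
  have hz := cube_zero (f := fun x => ψ b - ψ (a + ε * c x)) (by fun_prop)
    (fun x _ => sub_nonneg.2 (hbm (hin x))) (by
      rw [integral_sub (integrable_const _) (cube_int hcont)]
      have := h a ε
      simp; linarith)
  have hneg : ∃ x ∈ unitCube n, c x < 0 := by
    by_contra! hnn
    have := cube_zero hc hnn hci.le 0 (fun i _ => by simp)
    rw [hc0] at this
    norm_num at this
  obtain ⟨x, hx, hxn⟩ := hneg
  have h1 := hz x hx
  have h2 : a ≤ a + ε * c x := hal ⟨hin x, by simp only [Set.mem_preimage, Set.mem_singleton_iff]; linarith⟩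
  nlinarith

/-- the scalar plane wave -/
def cw (ξ : Fin n → ℤ) (x : Dom n) : ℝ := Real.cos (2 * Real.pi * ∑ i, (ξ i : ℝ) * x i)

theorem cw_int (ξ : Fin n → ℤ) (hξ : ξ ≠ 0) : ∫ x in unitCube n, cw ξ x = 0 := by
  obtain ⟨j, hj⟩ := Function.ne_iff.1 hξ
  have hj : ξ j ≠ 0 := hj
  let f : Fin n → ℝ → ℂ := fun i y => Complex.exp ((2 * Real.pi * Complex.I * ξ i) * y)
  have hf : ∫ y in Set.Ioo (-(1/2):ℝ) (1/2), f j y = 0 := by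
    have hne : (2 * Real.pi * Complex.I * ξ j : ℂ) ≠ 0 := by
      simp [hj, Real.pi_ne_zero]
    rw [← integral_Ioc_eq_integral_Ioo, ← intervalIntegral.integral_of_le (by norm_num)]
    simp only [f]
    rw [integral_exp_mul_complex hne]
    have : Complex.exp (2 * Real.pi * Complex.I * ξ j * ((1/2 : ℝ) : ℂ)) =
        Complex.exp (2 * Real.pi * Complex.I * ξ j * ((-(1/2) : ℝ) : ℂ)) := by
      rw [Complex.exp_eq_exp_iff_exists_int]
      refine ⟨ξ j, ?_⟩
      push_cast
      ring
    rw [this, sub_self, zero_div]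
  have h1 : ∫ x in unitCube n, ∏ i, f i (x i) = 0 := by
    unfold unitCube
    rw [volume_pi, Measure.restrict_pi_pi, integral_fintype_prod_eq_prod]
    exact Finset.prod_eq_zero (Finset.mem_univ j) hf
  have h2 : ∀ x, cw ξ x = Complex.reCLM (∏ i, f i (x i)) := by
    intro x
    simp only [f]
    rw [← Complex.exp_sum, cw]
    have : ∑ i, 2 * Real.pi * Complex.I * ξ i * (x i : ℂ) =
        ((2 * Real.pi * ∑ i, (ξ i : ℝ) * x i : ℝ) : ℂ) * Complex.I := by
      push_cast
      rw [Finset.mul_sum, Finset.sum_mul]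
      refine Finset.sum_congr rfl fun i _ => ?_
      ring
    rw [this, Complex.reCLM_apply, Complex.exp_ofReal_mul_I_re]
  simp_rw [h2]
  rw [ContinuousLinearMap.integral_comp_comm, h1, map_zero]
  apply cube_int
  fun_prop

theorem pderivDir_plane (j : Fin n) (ξ : Dom n) (lam : V) (a : ℝ) {g : ℝ → ℝ} (hg : Differentiable ℝ g) :
    pderivDir j (fun x : Dom n => (a * g (∑ i, ξ i * x i)) • lam) =
      fun x => ((ξ j * a) * deriv g (∑ i, ξ i * x i)) • lam := by
  ext x
  unfold pderivDir
  have h1 : HasFDerivAt (fun x : Dom n => ∑ i, ξ i * x i)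
      (∑ i, ξ i • (ContinuousLinearMap.proj i : Dom n →L[ℝ] ℝ)) x := by
    apply HasFDerivAt.fun_sum
    intro i _
    exact ((ContinuousLinearMap.proj i : Dom n →L[ℝ] ℝ).hasFDerivAt (x := x)).const_mul (ξ i)
  have h2 := ((((hg _).hasDerivAt.comp_hasFDerivAt x h1).const_mul a).smul_const lam).fderiv
  simp only [Function.comp_def] at h2
  rw [h2]
  simp [Pi.single_apply]
  congr 1
  ring

theorem foldr_plane (L : List (Fin n)) (α : Fin n → ℕ) (ξ : Dom n) (lam : V) {g : ℝ → ℝ}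
    (hg : ContDiff ℝ (⊤ : ℕ∞) g) :
    L.foldr (fun j f => (pderivDir j)^[α j] f) (fun x : Dom n => g (∑ i, ξ i * x i) • lam) =
      fun x => ((L.map fun j => ξ j ^ α j).prod *
        iteratedDeriv (L.map α).sum g (∑ i, ξ i * x i)) • lam := by
  induction L with
  | nil => simp
  | cons j L ih =>
    rw [List.foldr_cons, ih]
    simp only [List.map_cons, List.prod_cons, List.sum_cons]
    generalize α j = m
    induction m with
    | zero => simp
    | succ m ih2 =>
      rw [Function.iterate_succ_apply', ih2, pderivDir_plane]
      · ext x
        rw [show m + 1 + (L.map α).sum = (m + (L.map α).sum) + 1 by ring, iteratedDeriv_succ]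
        congr 2
        ring
      · exact hg.differentiable_iteratedDeriv _ (WithTop.coe_lt_coe.2 (ENat.coe_lt_top _))

theorem opApply_plane (A : (Fin n → ℕ) → (V →L[ℝ] W)) (k : ℕ) (ξ : Dom n) (lam : V) {g : ℝ → ℝ}
    (hg : ContDiff ℝ (⊤ : ℕ∞) g) (h : opSymbol A k ξ lam = 0) (x : Dom n) :
    opApply A k (fun x : Dom n => g (∑ i, ξ i * x i) • lam) x = 0 := by
  have : opApply A k (fun x : Dom n => g (∑ i, ξ i * x i) • lam) x =
      iteratedDeriv k g (∑ i, ξ i * x i) • opSymbol A k ξ lam := by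
    unfold opApply opSymbol
    rw [sum_apply, Finset.smul_sum]
    refine Finset.sum_congr rfl fun α hα => ?_
    unfold mderiv
    rw [foldr_plane _ _ _ _ hg, ← Fin.prod_univ_def, ← Fin.sum_univ_def, (Finset.mem_filter.1 hα).2,
      map_smul, mul_comm, mul_smul]
    rfl
  rw [this, h, smul_zero]

theorem dir_lip [FiniteDimensional ℝ V] (A : (Fin n → ℕ) → (V →L[ℝ] W)) (k : ℕ) {F : V → ℝ}
    (hF : AQuasiconvex A k F) {C : ℝ} (hC : ∀ z, |F z| ≤ C * (1 + ‖z‖)) (ξ : Fin n → ℤ) (hξ : ξ ≠ 0)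
    (lam : V) (hlam : opSymbol A k (fun i => (ξ i : ℝ)) lam = 0) (z : V) :
    F (z + lam) - F z ≤ C * ‖lam‖ := by
  have := FiniteDimensional.complete ℝ V
  have hC0 : 0 ≤ C := by
    have := (abs_nonneg _).trans (hC 0); simpa using this
  have hcc : Continuous (cw ξ) := by unfold cw; fun_prop
  have hq : ∀ (z : V) (ε : ℝ), F z ≤ ∫ x in unitCube n, F (z + (ε * cw ξ x) • lam) := by
    intro z ε
    have hg : ContDiff ℝ (⊤ : ℕ∞) (fun s : ℝ => ε * Real.cos (2 * Real.pi * s)) := by fun_prop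
    refine hF.2 z (fun x => (ε * cw ξ x) • lam) ?_ ?_ ?_ ?_
    · unfold cw; fun_prop
    · intro x m
      simp only
      congr 2
      unfold cw
      have : (2 * Real.pi * ∑ i, (ξ i : ℝ) * (x + fun i => (m i : ℝ)) i) =
          2 * Real.pi * ∑ i, (ξ i : ℝ) * x i + (∑ i, ξ i * m i : ℤ) * (2 * Real.pi) := by
        push_cast
        simp only [Pi.add_apply, mul_add, Finset.sum_add_distrib]
        ring
      rw [this, Real.cos_add_int_mul_two_pi]
    · rw [integral_smul_const, integral_const_mul, cw_int ξ hξ]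
      simp
    · exact opApply_plane A k (fun i => (ξ i : ℝ)) lam hg hlam
  apply le_of_forall_gt_imp_ge_of_dense
  intro K hK
  set ψ : ℝ → ℝ := fun s => F (z + s • lam) - F z - K * s with hψ
  have hFc := hF.1
  have hψc : Continuous ψ := by fun_prop
  set R := max 1 ((C * (1 + ‖z‖) - F z) / (K - C * ‖lam‖)) with hR
  have hR1 : 1 ≤ R := le_max_left _ _
  have hR2 : C * (1 + ‖z‖) - F z ≤ R * (K - C * ‖lam‖) := by
    rw [← div_le_iff₀ (by linarith)]
    exact le_max_right _ _
  have key := maxp (c := cw ξ) hcc (fun x => Real.abs_cos_le_one _) (by simp [cw]) (cw_int ξ hξ) hψc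
    ?_ (p := 0) (q := R) (by simp [hψ]) ?_ 1 ⟨by norm_num, hR1⟩
  · simp only [hψ, one_smul, mul_one] at key
    linarith
  · intro a ε
    have e : ∀ x, ψ (a + ε * cw ξ x) = F (z + a • lam + (ε * cw ξ x) • lam) - ((F z + K * a) + (K * ε) * cw ξ x) := by
      intro x
      simp only [hψ, add_smul, add_assoc]
      ring
    simp_rw [e]
    rw [integral_sub (cube_int (by fun_prop)) (cube_int (by fun_prop)),
      integral_add (integrable_const _) (cube_int (by fun_prop)), integral_const_mul, cw_int ξ hξ]
    have := hq (z + a • lam) ε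
    simp [hψ]
    linarith
  · have h1 := (abs_le.1 (hC (z + R • lam))).2
    have h2 : ‖z + R • lam‖ ≤ ‖z‖ + R * ‖lam‖ := by
      refine (norm_add_le _ _).trans ?_
      rw [norm_smul, Real.norm_of_nonneg (by linarith)]
    have h3 := mul_le_mul_of_nonneg_left h2 hC0
    simp only [hψ]
    nlinarith

theorem opSymbol_smul (A : (Fin n → ℕ) → (V →L[ℝ] W)) (k : ℕ) (c : ℝ) (ξ : Dom n) :
    opSymbol A k (c • ξ) = c ^ k • opSymbol A k ξ := by
  unfold opSymbol
  rw [Finset.smul_sum]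
  refine Finset.sum_congr rfl fun α hα => ?_
  rw [smul_smul]
  congr 1
  simp only [Pi.smul_apply, smul_eq_mul, mul_pow, Finset.prod_mul_distrib]
  rw [Finset.prod_pow_eq_pow_sum, (Finset.mem_filter.1 hα).2]

theorem wave_lip {U : Type*} [NormedAddCommGroup U] [NormedSpace ℝ U] [FiniteDimensional ℝ V]
    (A : (Fin n → ℕ) → (V →L[ℝ] W)) (B : (Fin n → ℕ) → (U →L[ℝ] V)) {k l : ℕ} (hl : 0 < l)
    (hexact : ExactPotential A k B l) {F : V → ℝ} (hF : AQuasiconvex A k F) {C : ℝ}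
    (hC : ∀ z, |F z| ≤ C * (1 + ‖z‖)) (lam : V) (hlam : lam ∈ waveCone A k) (z : V) :
    |F (z + lam) - F z| ≤ C * ‖lam‖ := by
  obtain ⟨ξ, hξ, hlam⟩ := hlam
  have : lam ∈ LinearMap.ker (opSymbol A k ξ : V →ₗ[ℝ] W) := hlam
  rw [hexact ξ hξ] at this
  obtain ⟨u, rfl⟩ := this
  have hFc := hF.1
  have hcont : Continuous fun ξ : Dom n => opSymbol B l ξ u := by
    unfold opSymbol
    simp only [sum_apply, smul_apply]
    fun_prop
  have hclosed : IsClosed {ξ : Dom n | |F (z + opSymbol B l ξ u) - F z| ≤ C * ‖opSymbol B l ξ u‖} := by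
    apply isClosed_le <;> fun_prop
  have hd : DenseRange (fun (q : Fin n → ℚ) (i : Fin n) => (q i : ℝ)) :=
    DenseRange.piMap (fun _ => Rat.denseRange_cast)
  refine hd.induction_on (p := fun ξ : Dom n => |F (z + opSymbol B l ξ u) - F z| ≤ C * ‖opSymbol B l ξ u‖)
    ξ hclosed ?_
  intro q
  by_cases hq : q = 0
  · have : (fun i => ((q i : ℚ) : ℝ)) = (0 : Dom n) := by ext i; simp [hq]
    rw [this, opSymbol_zero B hl]; simp
  set qr : Dom n := fun i => (q i : ℝ) with hqr
  have hqr0 : qr ≠ 0 := by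
    intro h; apply hq; ext i
    have := congrFun h i
    simpa [hqr] using this
  set N : ℕ := ∏ i, (q i).den with hN
  have hN0 : N ≠ 0 := Finset.prod_ne_zero_iff.2 fun i _ => (q i).den_nz
  have hm : ∀ i, ∃ m : ℤ, (m : ℝ) = N * (q i : ℝ) := by
    intro i
    obtain ⟨d, hd⟩ : (q i).den ∣ N := Finset.dvd_prod_of_mem _ (Finset.mem_univ i)
    refine ⟨d * (q i).num, ?_⟩
    have h1 : ((q i).den : ℝ) * (q i : ℝ) = (q i).num := by
      exact_mod_cast Rat.den_mul_eq_num (q i)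
    rw [hd]; push_cast
    rw [← h1]; ring
  choose m hm using hm
  have hmq : (fun i => (m i : ℝ)) = (N : ℝ) • qr := by
    ext i; simp [hm, hqr]
  have hm0 : m ≠ 0 := by
    intro h
    have : (N : ℝ) • qr = 0 := by rw [← hmq, h]; ext i; simp
    rcases smul_eq_zero.1 this with h | h
    · exact hN0 (by exact_mod_cast h)
    · exact hqr0 h
  have hker : opSymbol A k qr (opSymbol B l qr u) = 0 := by
    have : opSymbol B l qr u ∈ LinearMap.range (opSymbol B l qr : U →ₗ[ℝ] V) := ⟨u, rfl⟩
    rw [← hexact qr hqr0] at this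
    exact this
  have hker2 : opSymbol A k (fun i => (m i : ℝ)) (opSymbol B l qr u) = 0 := by
    rw [hmq, opSymbol_smul, smul_apply, hker, smul_zero]
  have h1 := dir_lip A k hF hC m hm0 _ hker2 z
  have h2 := dir_lip A k hF hC m hm0 (-(opSymbol B l qr u)) (by rw [map_neg, hker2, neg_zero])
    (z + opSymbol B l qr u)
  rw [add_neg_cancel_right, norm_neg] at h2
  rw [abs_le]
  constructor <;> linarith

theorem qc_lip {U : Type*} [NormedAddCommGroup U] [NormedSpace ℝ U] [FiniteDimensional ℝ V]
    (A : (Fin n → ℕ) → (V →L[ℝ] W)) (B : (Fin n → ℕ) → (U →L[ℝ] V)) {k l : ℕ} (hl : 0 < l)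
    (hspan : SpanningCone A k)
    (hexact : ExactPotential A k B l) {F : V → ℝ} (hF : AQuasiconvex A k F) 
    (hg : LinearGrowth F) : ∃ K : ℝ, 0 ≤ K ∧ ∀ x y, |F x - F y| ≤ K * ‖x - y‖ := by
  obtain ⟨C, hC⟩ := hg
  have hT : ∀ lam : V, ∃ K : ℝ, ∀ (s : ℝ) (z : V), |F (z + s • lam) - F z| ≤ K * |s| := by
    intro lam
    have : lam ∈ Submodule.span ℝ (waveCone A k) := by rw [hspan]; trivial
    induction this using Submodule.span_induction with
    | mem x h =>
      refine ⟨C * ‖x‖, fun s z => ?_⟩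
      have h2 : s • x ∈ waveCone A k := by
        obtain ⟨ξ, h1, h2⟩ := h
        exact ⟨ξ, h1, by rw [map_smul, h2, smul_zero]⟩
      have := wave_lip A B hl hexact hF hC _ h2 z
      rwa [norm_smul, Real.norm_eq_abs, mul_comm |s|, ← mul_assoc] at this
    | zero => exact ⟨0, by simp⟩
    | add x y _ _ hx hy =>
      obtain ⟨K1, h1⟩ := hx
      obtain ⟨K2, h2⟩ := hy
      refine ⟨K1 + K2, fun s z => ?_⟩
      have e1 := h1 s z
      have e2 := h2 s (z + s • x)
      rw [smul_add, ← add_assoc]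
      have := abs_sub_le (F (z + s • x + s • y)) (F (z + s • x)) (F z)
      linarith
    | smul a x _ hx =>
      obtain ⟨K1, h1⟩ := hx
      refine ⟨K1 * |a|, fun s z => ?_⟩
      have e1 := h1 (s * a) z
      rw [smul_smul]
      rwa [abs_mul, mul_comm |s|, ← mul_assoc] at e1
  choose K hK using hT
  let b := Module.finBasis ℝ V
  have hK0 : ∀ v, 0 ≤ K v := fun v => by
    have := (abs_nonneg _).trans (hK v 1 0); simpa using this
  have hsum : ∀ (S : Finset (Fin (Module.finrank ℝ V))) (c : Fin (Module.finrank ℝ V) → ℝ) (y : V),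
      |F (y + ∑ i ∈ S, c i • b i) - F y| ≤ ∑ i ∈ S, K (b i) * |c i| := by
    classical
    intro S c y
    induction S using Finset.induction_on with
    | empty => simp
    | insert i S hi ih =>
      rw [Finset.sum_insert hi, Finset.sum_insert hi, add_comm (c i • b i), ← add_assoc]
      have e := hK (b i) (c i) (y + ∑ i ∈ S, c i • b i)
      have := abs_sub_le (F (y + ∑ i ∈ S, c i • b i + c i • b i)) (F (y + ∑ i ∈ S, c i • b i)) (F y)
      linarith
  let cl : Fin (Module.finrank ℝ V) → (V →L[ℝ] ℝ) := fun i => LinearMap.toContinuousLinearMap (b.coord i)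
  refine ⟨∑ i, K (b i) * ‖cl i‖, Finset.sum_nonneg fun i _ => mul_nonneg (hK0 _) (norm_nonneg _), fun x y => ?_⟩
  have h1 := hsum Finset.univ (fun i => b.repr (x - y) i) y
  rw [b.sum_repr, add_sub_cancel] at h1
  refine h1.trans ?_
  rw [Finset.sum_mul]
  refine Finset.sum_le_sum fun i _ => ?_
  rw [mul_assoc]
  refine mul_le_mul_of_nonneg_left ?_ (hK0 _)
  exact (cl i).le_opNorm (x - y)

end Lip
section Final

variable {V : Type*} [NormedAddCommGroup V] [InnerProductSpace ℝ V] [FiniteDimensional ℝ V]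

theorem mem_derivSet {F : V → ℝ} {p : V} (h : DifferentiableAt ℝ F p) :
    (InnerProductSpace.toDual ℝ V).symm (fderiv ℝ F p) ∈ derivSet F := by
  refine ⟨p, ?_⟩
  rw [LinearIsometryEquiv.apply_symm_apply]
  exact h.hasFDerivAt

theorem lip_of_deriv [MeasurableSpace V] [BorelSpace V] {F : V → ℝ} {K : NNReal}
    (hF : LipschitzWith K F) {M : ℝ}
    (hM : ∀ ζ ∈ derivSet F, ‖ζ‖ ≤ M) (x y : V) : |F x - F y| ≤ M * ‖x - y‖ := by
  set μ : Measure V := Measure.addHaar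
  have hae : ∀ᵐ p ∂μ, DifferentiableAt ℝ F p := hF.ae_differentiableAt
  have hb : ∀ p, DifferentiableAt ℝ F p → ‖fderiv ℝ F p‖ ≤ M := by
    intro p hp
    have := hM _ (mem_derivSet hp)
    rwa [LinearIsometryEquiv.norm_map] at this
  have main : ∀ r : ℝ, 0 < r → |F x - F y| ≤ M * ‖x - y‖ + 2 * (K * r) := by
    intro r hr
    set ν := μ.restrict (Metric.closedBall (0:V) r) with hν
    have : IsFiniteMeasure ν := ⟨by
      rw [hν, Measure.restrict_apply_univ]; exact (isCompact_closedBall _ _).measure_lt_top⟩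
    set m := ν.real Set.univ with hm
    have hm0 : 0 < m := by
      rw [hm, measureReal_def]
      apply ENNReal.toReal_pos
      · rw [hν, Measure.restrict_apply_univ]
        exact (Metric.measure_closedBall_pos μ _ hr).ne'
      · exact measure_ne_top _ _
    have hint : ∀ p, Integrable (fun q => F (p + q)) ν := fun p =>
      ((hF.continuous.comp (continuous_const.add continuous_id)).continuousOn.integrableOn_compact
        (isCompact_closedBall _ _))
    have hd : ∀ p, HasFDerivAt (fun p => ∫ q, F (p + q) ∂ν) (∫ q, fderiv ℝ F (p + q) ∂ν) p ∧
        ‖∫ q, fderiv ℝ F (p + q) ∂ν‖ ≤ M * m := by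
      intro p
      have hae2 : ∀ᵐ q ∂ν, DifferentiableAt ℝ F (p + q) :=
        ae_restrict_of_ae ((measurePreserving_add_left μ p).quasiMeasurePreserving.ae hae)
      constructor
      · refine (hasFDerivAt_integral_of_dominated_loc_of_lip (bound := fun _ => (K : ℝ)) (s := Set.univ)
          Filter.univ_mem
          (Eventually.of_forall fun p => (hint p).aestronglyMeasurable) (hint p) ?_ ?_
          (integrable_const _) ?_).2
        · exact ((measurable_fderiv ℝ F).comp (measurable_const_add p)).aestronglyMeasurable
        · refine Eventually.of_forall fun q => ?_
          simp only [Real.nnabs_coe]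
          apply LipschitzWith.lipschitzOnWith
          have := hF.comp (LipschitzWith.of_dist_le_mul (K := 1) (f := fun p : V => p + q) (by simp))
          rwa [mul_one] at this
        · filter_upwards [hae2] with q hq
          exact (hasFDerivAt_comp_add_right q).2 hq.hasFDerivAt
      · apply norm_integral_le_of_norm_le_const
        filter_upwards [hae2] with q hq
        exact hb _ hq
    have h1 : ‖(∫ q, F (x + q) ∂ν) - ∫ q, F (y + q) ∂ν‖ ≤ M * m * ‖x - y‖ :=
      convex_univ.norm_image_sub_le_of_norm_hasFDerivWithin_le
        (fun p _ => (hd p).1.hasFDerivWithinAt) (fun p _ => (hd p).2) (Set.mem_univ y) (Set.mem_univ x)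
    have h2 : ∀ p, ‖(∫ q, F (p + q) ∂ν) - m * F p‖ ≤ K * r * m := by
      intro p
      have : m * F p = ∫ q, F p ∂ν := by simp [hm]
      rw [this, ← integral_sub (hint p) (integrable_const _)]
      apply norm_integral_le_of_norm_le_const
      refine (ae_restrict_iff' Metric.isClosed_closedBall.measurableSet).2 (Eventually.of_forall fun q hq => ?_)
      have := hF.dist_le_mul (p + q) p
      rw [Real.dist_eq, dist_eq_norm, add_sub_cancel_left] at this
      rw [Real.norm_eq_abs]
      refine this.trans (mul_le_mul_of_nonneg_left (by simpa using hq) K.2)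
    have e1 := abs_le.1 (h2 x)
    have e2 := abs_le.1 (h2 y)
    have e3 := abs_le.1 h1
    have e4 : |m * (F x - F y)| ≤ m * (M * ‖x - y‖ + 2 * (K * r)) := by
      rw [abs_le]
      constructor <;> nlinarith
    rw [abs_mul, abs_of_pos hm0] at e4
    exact le_of_mul_le_mul_left e4 hm0
  have ht : Tendsto (fun r : ℝ => M * ‖x - y‖ + 2 * (K * r)) (𝓝[>] 0) (𝓝 (M * ‖x - y‖ + 2 * (K * 0))) :=
    (Continuous.tendsto (by fun_prop) 0).mono_left nhdsWithin_le_nhds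
  rw [mul_zero, mul_zero, add_zero] at ht
  exact ge_of_tendsto ht (eventually_mem_nhdsWithin.mono main)

theorem rrec_eq {Φ g : V → ℝ} (h : HasRec Φ g) (w : V) : rrec Φ w = g w :=
  Tendsto.limsup_eq ((h.tendstoLocallyUniformlyOn (s := Set.univ)).tendsto_at (Set.mem_univ w))

theorem hasRec_linear (f : V →L[ℝ] ℝ) : HasRec f f := by
  have : TendstoLocallyUniformly (fun (_ : ℝ) (z : V) => f z) f atTop := by
    intro u hu x
    exact ⟨Set.univ, univ_mem, Eventually.of_forall fun _ y _ => refl_mem_uniformity hu⟩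
  intro u hu x
  refine ⟨Set.univ, univ_mem, ?_⟩
  filter_upwards [eventually_gt_atTop (0:ℝ)] with t ht y _
  rw [map_smul, smul_eq_mul, mul_div_cancel_left₀ _ ht.ne']
  exact refl_mem_uniformity hu

theorem memH_linear (f : V →L[ℝ] ℝ) : MemH f := by
  refine ⟨f.continuous, ⟨‖f‖, fun z => ?_⟩, _, hasRec_linear f⟩
  have := f.le_opNorm z
  rw [Real.norm_eq_abs] at this
  nlinarith [norm_nonneg f]

theorem hasRec_blow {F g : V → ℝ} (hg : HasRec F g) {K : ℝ} (hK : ∀ x y, |F x - F y| ≤ K * ‖x - y‖)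
    (z₀ : V) {s : ℝ} (hs : 0 < s) : HasRec (fun w => s⁻¹ * (F (z₀ + s • w) - F z₀)) g := by
  unfold HasRec at *
  rw [Metric.tendstoLocallyUniformly_iff] at *
  intro ε hε x
  obtain ⟨S, hS, h⟩ := hg (ε / 2) (by linarith) x
  refine ⟨S, hS, ?_⟩
  have ht : Tendsto (fun t : ℝ => s * t) atTop atTop := tendsto_id.const_mul_atTop hs
  set E := K * ‖z₀‖ + |F z₀| with hE
  have hE2 : ∀ᶠ t : ℝ in atTop, E / (s * t) < ε / 2 :=
    (ht.const_div_atTop E).eventually_lt_const (by linarith)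
  filter_upwards [ht.eventually h, hE2, eventually_gt_atTop 0] with t h1 h2 h3 y hy
  have h4 := h1 y hy
  have hst : 0 < s * t := mul_pos hs h3
  rw [Real.dist_eq] at *
  have e : s⁻¹ * (F (z₀ + s • t • y) - F z₀) / t = (F (z₀ + (s * t) • y) - F z₀) / (s * t) := by
    rw [smul_smul]; field_simp
  rw [e]
  have h5 : |F ((s * t) • y) / (s * t) - (F (z₀ + (s * t) • y) - F z₀) / (s * t)| ≤ E / (s * t) := by
    rw [← sub_div, abs_div, abs_of_pos hst]
    apply div_le_div_of_nonneg_right _ hst.le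
    have h6 := hK ((s * t) • y) (z₀ + (s * t) • y)
    rw [show (s * t) • y - (z₀ + (s * t) • y) = - z₀ by abel, norm_neg] at h6
    have h7 := abs_add_le (F ((s * t) • y) - F (z₀ + (s * t) • y)) (F z₀)
    rw [show F ((s * t) • y) - (F (z₀ + (s * t) • y) - F z₀) =
      F ((s * t) • y) - F (z₀ + (s * t) • y) + F z₀ by ring]
    linarith
  have := abs_sub_le (g y) (F ((s * t) • y) / (s * t)) ((F (z₀ + (s * t) • y) - F z₀) / (s * t))
  linarith

theorem blow_bound {F : V → ℝ} {K : ℝ} (hK : ∀ x y, |F x - F y| ≤ K * ‖x - y‖)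
    (z₀ : V) {s : ℝ} (hs : 0 < s) (w : V) : |s⁻¹ * (F (z₀ + s • w) - F z₀)| ≤ K * ‖w‖ := by
  rw [abs_mul, abs_of_pos (inv_pos.2 hs), inv_mul_le_iff₀ hs]
  have := hK (z₀ + s • w) z₀
  rw [add_sub_cancel_left, norm_smul, Real.norm_of_nonneg hs.le] at this
  linarith

theorem memH_blow {F g : V → ℝ} (hFc : Continuous F) (hg : HasRec F g) {K : ℝ} (hK0 : 0 ≤ K)
    (hK : ∀ x y, |F x - F y| ≤ K * ‖x - y‖)
    (z₀ : V) {s : ℝ} (hs : 0 < s) : MemH (fun w => s⁻¹ * (F (z₀ + s • w) - F z₀)) := by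
  refine ⟨by fun_prop, ⟨K, fun w => ?_⟩, g, hasRec_blow hg hK z₀ hs⟩
  have := blow_bound hK z₀ hs w
  linarith

theorem main_ineq {n k l : ℕ} (hl : 0 < l)
    {W U : Type*} [MeasurableSpace V] [BorelSpace V]
    [NormedAddCommGroup W] [NormedSpace ℝ W]
    [NormedAddCommGroup U] [NormedSpace ℝ U] [FiniteDimensional ℝ U]
    (A : (Fin n → ℕ) → (V →L[ℝ] W)) (B : (Fin n → ℕ) → (U →L[ℝ] V))
    (hexact : ExactPotential A k B l)
    (z : V) (t : ℝ) (ht : 0 < t)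
    (nu0 : Measure V) (nuInf : Measure (Metric.sphere (0:V) 1))
    (hmom : Integrable (fun v : V => ‖v‖) nu0)
    (hprobInf : IsProbabilityMeasure nuInf)
    (hY : memY B l z nu0 (ENNReal.ofReal t • nuInf))
    (F : V → ℝ) (hF : MemH F) (hFqc : AQuasiconvex A k F) {K : ℝ} (hK0 : 0 ≤ K)
    (hK : ∀ x y, |F x - F y| ≤ K * ‖x - y‖) (ζ : V) (hζ : ζ ∈ derivSet F) :
    (inner ℝ ζ (∫ w, (w : V) ∂nuInf) : ℝ) ≤ ∫ w, rrec F (w : V) ∂nuInf := by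
  obtain ⟨z₀, hz₀⟩ := hζ
  obtain ⟨hFc, -, g, hg⟩ := hF
  obtain ⟨u, hu, -, hlim⟩ := hY
  have hcomplete := FiniteDimensional.complete ℝ V
  set f : V →L[ℝ] ℝ := InnerProductSpace.toDual ℝ V ζ with hf
  have hrF : (∫ w, rrec F (w : V) ∂nuInf) = ∫ w : Metric.sphere (0:V) 1, g w ∂nuInf := by
    simp_rw [rrec_eq hg]
  have htt : (ENNReal.ofReal t).toReal = t := ENNReal.toReal_ofReal ht.le
  -- smoothness of B u
  have hBu : ∀ j, Continuous (opApply B l (u j)) ∧ ∫ x in unitCube n, opApply B l (u j) x = 0 := by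
    intro j
    have e := OP_coe B l (⟨u j, (hu j).1⟩ : SM n U)
    simp only at e
    rw [e]
    refine ⟨(SM.sm _).continuous, ?_⟩
    rw [setIntegral_eq_integral_of_forall_compl_eq_zero]
    · exact integral_OP_zero B hl _ (hu j).2.1
    · intro x hx
      by_contra h
      exact hx ((hu j).2.2 (supp_OP B l _ h))
  -- barycenter
  have hbar : f z = (∫ v, f v ∂nu0) + t * ∫ w : Metric.sphere (0:V) 1, f w ∂nuInf := by
    have h1 := hlim f (memH_linear f)
    simp_rw [rrec_eq (hasRec_linear f)] at h1
    rw [integral_smul_measure, htt, smul_eq_mul] at h1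
    refine tendsto_nhds_unique (tendsto_const_nhds.congr fun j => ?_) h1
    have hi : IntegrableOn (fun x => z + opApply B l (u j) x) (unitCube n) :=
      cube_int (continuous_const.add (hBu j).1)
    rw [ContinuousLinearMap.integral_comp_comm f hi,
      integral_add (integrable_const _) (cube_int (hBu j).1), (hBu j).2]
    simp
  -- Jensen
  have hJ : ∀ s : ℝ, 0 < s → s⁻¹ * (F (z₀ + s • z) - F z₀) ≤
      (∫ v, s⁻¹ * (F (z₀ + s • v) - F z₀) ∂nu0) + t * ∫ w : Metric.sphere (0:V) 1, g w ∂nuInf := by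
    intro s hs
    have h1 := hlim _ (memH_blow hFc hg hK0 hK z₀ hs)
    simp_rw [rrec_eq (hasRec_blow hg hK z₀ hs)] at h1
    rw [integral_smul_measure, htt, smul_eq_mul] at h1
    refine ge_of_tendsto h1 (Eventually.of_forall fun j => ?_)
    have hc := (hBu j).1
    have h2 := jensen A B hl hexact hFqc (hu j) (z₀ + s • z) s
    rw [integral_const_mul, integral_sub (cube_int (by fun_prop)) (integrable_const _)]
    apply mul_le_mul_of_nonneg_left _ (inv_pos.2 hs).le
    simp only [smul_add, ← add_assoc]
    simpa using h2
  -- limit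
  have hslope : ∀ w : V, Tendsto (fun s : ℝ => s⁻¹ * (F (z₀ + s • w) - F z₀)) (𝓝[>] 0) (𝓝 (f w)) :=
    fun w => (hz₀.hasLineDerivAt w).tendsto_slope_zero_right
  have hL : Tendsto (fun s : ℝ => ∫ v, s⁻¹ * (F (z₀ + s • v) - F z₀) ∂nu0) (𝓝[>] 0) (𝓝 (∫ v, f v ∂nu0)) := by
    refine tendsto_integral_filter_of_dominated_convergence (fun v => K * ‖v‖) ?_ ?_ (hmom.const_mul K)
      (Eventually.of_forall hslope)
    · refine Eventually.of_forall fun s => Continuous.aestronglyMeasurable (by fun_prop)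
    · filter_upwards [eventually_mem_nhdsWithin] with s hs
      exact Eventually.of_forall fun v => blow_bound hK z₀ hs v
  have hfin := le_of_tendsto_of_tendsto (hslope z) (hL.add_const _)
    (eventually_mem_nhdsWithin.mono fun s hs => hJ s hs)
  rw [hbar] at hfin
  have h3 : t * ∫ w : Metric.sphere (0:V) 1, f w ∂nuInf ≤ t * ∫ w : Metric.sphere (0:V) 1, g w ∂nuInf := by
    linarith
  have h4 := le_of_mul_le_mul_left h3 ht
  rw [hrF]
  refine le_trans (le_of_eq ?_) h4
  have hi : Integrable (fun w : Metric.sphere (0:V) 1 => (w : V)) nuInf := by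
    refine Integrable.of_bound continuous_subtype_val.aestronglyMeasurable 1 (Eventually.of_forall fun w => ?_)
    simp
  rw [ContinuousLinearMap.integral_comp_comm f hi]
  rfl

end Final
/-! ## Statement 17: a necessary condition at points of diffuse concentration -/

theorem stmt17 {n k l : ℕ} (hn : 0 < n) (hk : 0 < k) (hl : 0 < l)
    {V W U : Type*} [NormedAddCommGroup V] [InnerProductSpace ℝ V] [FiniteDimensional ℝ V]
    [MeasurableSpace V] [BorelSpace V]
    [NormedAddCommGroup W] [InnerProductSpace ℝ W] [FiniteDimensional ℝ W]
    [NormedAddCommGroup U] [InnerProductSpace ℝ U] [FiniteDimensional ℝ U]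
    (A : (Fin n → ℕ) → (V →L[ℝ] W)) (B : (Fin n → ℕ) → (U →L[ℝ] V))
    (hspan : SpanningCone A k) (hexact : ExactPotential A k B l)
    (z : V) (t : ℝ) (ht : 0 < t)
    (nu0 : Measure V) (nuInf : Measure (Metric.sphere (0:V) 1))
    (hprob : IsProbabilityMeasure nu0) (hmom : Integrable (fun v : V => ‖v‖) nu0)
    (hprobInf : IsProbabilityMeasure nuInf)
    (hY : memY B l z nu0 (ENNReal.ofReal t • nuInf))
    (F : V → ℝ) (hF : MemH F) (hFqc : AQuasiconvex A k F) :
    suppFn (derivSet F) (∫ w, (w : V) ∂nuInf) ≤ (∫ w, rrec F (w : V) ∂nuInf) ∧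
    (∃ M : ℝ, ∀ ζ ∈ derivSet F, ‖ζ‖ ≤ M) ∧
    sSup ((fun ζ => ‖ζ‖) '' derivSet F) =
      sInf {K : ℝ | 0 ≤ K ∧ ∀ x y, |F x - F y| ≤ K * ‖x - y‖} := by
  obtain ⟨K, hK0, hK⟩ := qc_lip A B hl hspan hexact hFqc hF.2.1
  have hLip : LipschitzWith (Real.toNNReal K) F := LipschitzWith.of_dist_le_mul fun x y => by
    rw [Real.dist_eq, dist_eq_norm, Real.coe_toNNReal _ hK0]
    exact hK x y
  have hbd : ∀ K : ℝ, 0 ≤ K → (∀ x y, |F x - F y| ≤ K * ‖x - y‖) → ∀ ζ ∈ derivSet F, ‖ζ‖ ≤ K := by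
    intro K hK0 hK ζ hζ
    obtain ⟨z₀, h⟩ := hζ
    have := h.le_of_lip' hK0 (Eventually.of_forall fun x => by
      rw [Real.norm_eq_abs]; exact hK x z₀)
    rwa [LinearIsometryEquiv.norm_map] at this
  have hne : (derivSet F).Nonempty := by
    obtain ⟨p, hp⟩ := (hLip.ae_differentiableAt (μ := (Measure.addHaar : Measure V))).exists
    exact ⟨_, mem_derivSet hp⟩
  refine ⟨?_, ⟨K, hbd K hK0 hK⟩, ?_⟩
  · apply csSup_le (hne.image _)
    rintro _ ⟨ζ, hζ, rfl⟩
    exact main_ineq hl A B hexact z t ht nu0 nuInf hmom hprobInf hY F hF hFqc hK0 hK ζ hζ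
  · have hbdd : BddAbove ((fun ζ => ‖ζ‖) '' derivSet F) := by
      refine ⟨K, ?_⟩
      rintro _ ⟨ζ, hζ, rfl⟩
      exact hbd K hK0 hK ζ hζ
    apply le_antisymm
    · refine le_csInf (s := {K : ℝ | 0 ≤ K ∧ ∀ x y, |F x - F y| ≤ K * ‖x - y‖}) ⟨K, hK0, hK⟩ ?_
      rintro K' ⟨h0, h1⟩
      apply csSup_le (hne.image _)
      rintro _ ⟨ζ, hζ, rfl⟩
      exact hbd K' h0 h1 ζ hζ
    · apply csInf_le ⟨0, fun _ h => h.1⟩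
      refine ⟨?_, fun x y => lip_of_deriv hLip (fun ζ hζ => le_csSup hbdd ⟨ζ, hζ, rfl⟩) x y⟩
      obtain ⟨ζ, hζ⟩ := hne
      exact (norm_nonneg ζ).trans (le_csSup hbdd ⟨ζ, hζ, rfl⟩)



end
end
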